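/- arXiv:1811.02717 — 3 statements merged into one kernel-verified Lean document; each statement's English description precedes it below -/
import Mathlib

section
/- (Leibniz Type Rule I.) Let 0 < α < 1, 0 < β ≤ 1, and set ξ := (1−β)(1−α). Let a < b, Ψ : ℝ → ℝ strictly increasing and continuously differentiable on [a,b] with Ψ'(t) > 0 for all t ∈ [a,b]. Suppose f = h ∘ Ψ and g = w ∘ Ψ with h, w : ℝ → ℝ real-analytic with everywhere-convergent power series, and write f⁽ᵐ⁾(x) := h⁽ᵐ⁾(Ψ(x)). Then for every x ∈ (a,b): (^{H}D^{α,β;Ψ}(f·g))(x) = Σ_{l=0}^∞ Σ_{m=l}^∞ binom(−ξ, m−l) binom(α+ξ, l) f⁽ᵐ⁾(x) (^{RL}D^{α−m;Ψ} g)(x) − Σ_{k=0}^∞ binom(−ξ, k) (I^{ξ+k;Ψ}g)(a) f⁽ᵏ⁾(a) (Ψ(x) − Ψ(a))^{−(α+ξ)} / Γ(β(1−α)), where (I^{γ;Ψ}g)(a) := 0 for γ > 0 and := g(a) for γ = 0, all series converging. -/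
open Real

/-- Generalized binomial coefficient `binom(γ, n) = γ(γ-1)⋯(γ-n+1)/n!`. -/
noncomputable def genBinom (γ : ℝ) (n : ℕ) : ℝ :=
  (∏ i ∈ Finset.range n, (γ - (i : ℝ))) / (n.factorial : ℝ)

/-- Ψ-Riemann–Liouville fractional integral of order `α` with base point `a`;
by convention the order-0 integral is the identity. -/
noncomputable def psiI (a : ℝ) (Ψ f : ℝ → ℝ) (α : ℝ) (x : ℝ) : ℝ :=
  if α = 0 then f x
  else (Real.Gamma α)⁻¹ * ∫ t in a..x, deriv Ψ t * (Ψ x - Ψ t) ^ (α - 1) * f t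

/-- Ψ-Riemann–Liouville fractional derivative of order `γ` (for `γ ≤ 0` it is the
fractional integral of order `-γ`, the order-0 case being the identity). -/
noncomputable def psiRLD (a : ℝ) (Ψ f : ℝ → ℝ) (γ : ℝ) (x : ℝ) : ℝ :=
  if γ ≤ 0 then psiI a Ψ f (-γ) x
  else (deriv Ψ x)⁻¹ * deriv (fun y => psiI a Ψ f (1 - γ) y) x

/-- Ψ-Caputo fractional derivative of order `γ` (for `γ ≤ 0` it is the
fractional integral of order `-γ`). -/
noncomputable def psiCD (a : ℝ) (Ψ f : ℝ → ℝ) (γ : ℝ) (x : ℝ) : ℝ :=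
  if γ ≤ 0 then psiI a Ψ f (-γ) x
  else psiI a Ψ (fun t => (deriv Ψ t)⁻¹ * deriv f t) (1 - γ) x

/-- Ψ-Hilfer fractional derivative of order `α` and type `β`. -/
noncomputable def psiHD (a : ℝ) (Ψ f : ℝ → ℝ) (α β : ℝ) (x : ℝ) : ℝ :=
  psiI a Ψ
    (fun y => (deriv Ψ y)⁻¹ * deriv (fun z => psiI a Ψ f ((1 - β) * (1 - α)) z) y)
    (β * (1 - α)) x

/-- Classical Riemann–Liouville fractional integral with base point `a`. -/
noncomputable def rlI (a : ℝ) (α : ℝ) (f : ℝ → ℝ) (x : ℝ) : ℝ :=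
  if α = 0 then f x
  else (Real.Gamma α)⁻¹ * ∫ t in a..x, (x - t) ^ (α - 1) * f t

/-- Classical Riemann–Liouville fractional derivative (fractional integral for `γ ≤ 0`). -/
noncomputable def rlD (a : ℝ) (γ : ℝ) (f : ℝ → ℝ) (x : ℝ) : ℝ :=
  if γ ≤ 0 then rlI a (-γ) f x
  else deriv (fun y => rlI a (1 - γ) f y) x

/-- Classical Caputo fractional derivative (fractional integral for `γ ≤ 0`). -/
noncomputable def capD (a : ℝ) (γ : ℝ) (f : ℝ → ℝ) (x : ℝ) : ℝ :=
  if γ ≤ 0 then rlI a (-γ) f x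
  else rlI a (1 - γ) (deriv f) x

/-- Classical Hilfer fractional derivative of order `α` and type `β`. -/
noncomputable def hilD (a : ℝ) (α β : ℝ) (f : ℝ → ℝ) (x : ℝ) : ℝ :=
  rlI a (β * (1 - α))
    (fun y => deriv (fun z => rlI a ((1 - β) * (1 - α)) f z) y) x

/-- Hadamard fractional integral with base point `a`. -/
noncomputable def hadI (a : ℝ) (α : ℝ) (f : ℝ → ℝ) (x : ℝ) : ℝ :=
  if α = 0 then f x
  else (Real.Gamma α)⁻¹ * ∫ t in a..x, (Real.log x - Real.log t) ^ (α - 1) * f t / t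

/-- Caputo–Hadamard fractional derivative (Hadamard fractional integral for `γ ≤ 0`). -/
noncomputable def chD (a : ℝ) (γ : ℝ) (f : ℝ → ℝ) (x : ℝ) : ℝ :=
  if γ ≤ 0 then hadI a (-γ) f x
  else hadI a (1 - γ) (fun t => t * deriv f t) x

/-- `h` is real-analytic with a power series converging on all of `ℝ`. -/
def EntireReal (h : ℝ → ℝ) : Prop :=
  ∃ p : FormalMultilinearSeries ℝ ℝ ℝ, HasFPowerSeriesOnBall h p 0 ⊤


namespace LTR

open Set Filter Topology MeasureTheory

lemma beta_int {u v : ℝ} (hu : 0 < u) (hv : 0 < v) {A X : ℝ} (h : A < X) :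
    ∫ s in A..X, (X - s) ^ (u - 1) * (s - A) ^ (v - 1)
      = Gamma u * Gamma v / Gamma (u + v) * (X - A) ^ (u + v - 1) := by
  have h1 := Complex.betaIntegral_scaled (v : ℂ) (u : ℂ) (sub_pos.2 h)
  rw [Complex.betaIntegral_eq_Gamma_mul_div _ _ (by simpa) (by simpa)] at h1
  have h2 : ∫ x in (0:ℝ)..(X - A), (x : ℂ) ^ ((v : ℂ) - 1) * (((X - A : ℝ) : ℂ) - x) ^ ((u : ℂ) - 1)
      = ((∫ x in (0:ℝ)..(X - A), x ^ (v - 1) * (X - A - x) ^ (u - 1) : ℝ) : ℂ) := by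
    rw [← intervalIntegral.integral_ofReal]
    apply intervalIntegral.integral_congr
    intro x hx
    rw [uIcc_of_le (sub_pos.2 h).le] at hx
    simp only
    rw [Complex.ofReal_mul, Complex.ofReal_cpow hx.1, Complex.ofReal_cpow (by linarith [hx.2])]
    push_cast
    rfl
  rw [h2] at h1
  have h3 : ∫ x in (0:ℝ)..(X - A), x ^ (v - 1) * (X - A - x) ^ (u - 1)
      = (X - A) ^ (v + u - 1) * (Gamma v * Gamma u / Gamma (v + u)) := by
    apply Complex.ofReal_injective
    rw [h1]
    rw [Complex.ofReal_mul, Complex.ofReal_cpow (sub_pos.2 h).le, Complex.ofReal_div,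
      Complex.ofReal_mul, ← Complex.Gamma_ofReal, ← Complex.Gamma_ofReal, ← Complex.Gamma_ofReal]
    push_cast
    rfl
  have h4 := intervalIntegral.integral_comp_sub_right (a := A) (b := X)
    (fun x => x ^ (v - 1) * (X - A - x) ^ (u - 1)) A
  rw [sub_self] at h4
  rw [h3] at h4
  rw [add_comm v u] at h4
  rw [mul_comm (Gamma u), mul_comm (_ / _), ← h4]
  apply intervalIntegral.integral_congr
  intro x hx
  simp only
  rw [mul_comm]
  congr 2
  ring

lemma beta_integrable {u v : ℝ} (hu : 0 < u) (hv : 0 < v) {A X : ℝ} (h : A < X) :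
    IntervalIntegrable (fun s => (X - s) ^ (u - 1) * (s - A) ^ (v - 1)) volume A X := by
  apply intervalIntegral.intervalIntegrable_of_integral_ne_zero
  rw [beta_int hu hv h]
  have := Gamma_pos_of_pos hu
  have := Gamma_pos_of_pos hv
  have := Gamma_pos_of_pos (add_pos hu hv)
  have := Real.rpow_pos_of_pos (sub_pos.2 h) (u + v - 1)
  positivity

lemma sing_integrable {γ : ℝ} (hγ : 0 < γ) {A X : ℝ} {G : ℝ → ℝ}
    (hG : ContinuousOn G (uIcc A X)) :
    IntervalIntegrable (fun s => (X - s) ^ (γ - 1) * G s) volume A X := by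
  apply IntervalIntegrable.mul_continuousOn _ hG
  have := (intervalIntegral.intervalIntegrable_rpow' (a := X - A) (b := 0) (r := γ - 1)
    (by linarith)).comp_sub_left X
  simpa using this

lemma slice_int {η ξ : ℝ} (hη : 0 < η) (hξ : 0 < ξ) {A X t : ℝ} (ht : t ∈ Ioo A X) (c : ℝ) :
    IntegrableOn (fun s => if t < s then (X - s) ^ (η - 1) * ((s - t) ^ (ξ - 1) * c) else 0)
      (Ioc A X) ∧
    ∫ s in Ioc A X, (if t < s then (X - s) ^ (η - 1) * ((s - t) ^ (ξ - 1) * c) else 0)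
      = Gamma η * Gamma ξ / Gamma (η + ξ) * ((X - t) ^ (η + ξ - 1) * c) := by
  have e : (fun s => if t < s then (X - s) ^ (η - 1) * ((s - t) ^ (ξ - 1) * c) else 0)
      = indicator (Ioi t) (fun s => (X - s) ^ (η - 1) * (s - t) ^ (ξ - 1) * c) := by
    ext s
    simp only [indicator, mem_Ioi, mul_assoc]
  have e2 : Ioc A X ∩ Ioi t = Ioc t X := by
    ext s; simp only [mem_inter_iff, mem_Ioc, mem_Ioi]
    constructor
    · rintro ⟨⟨_, h⟩, h'⟩; exact ⟨h', h⟩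
    · rintro ⟨h', h⟩; exact ⟨⟨ht.1.trans h', h⟩, h'⟩
  have hi := (beta_integrable hη hξ ht.2).mul_const c
  rw [intervalIntegrable_iff_integrableOn_Ioc_of_le ht.2.le] at hi
  rw [e]
  constructor
  · rw [integrableOn_indicator_iff measurableSet_Ioi, inter_comm, e2]
    exact hi
  · rw [setIntegral_indicator measurableSet_Ioi, e2, ← intervalIntegral.integral_of_le ht.2.le,
      intervalIntegral.integral_mul_const, beta_int hη hξ ht.2]
    ring

lemma semigroup {η ξ : ℝ} (hη : 0 < η) (hξ : 0 < ξ) {A X : ℝ} (h : A < X) {G : ℝ → ℝ}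
    (hG : Continuous G) :
    ∫ s in A..X, (X - s) ^ (η - 1) * ∫ t in A..s, (s - t) ^ (ξ - 1) * G t
      = Gamma η * Gamma ξ / Gamma (η + ξ) * ∫ t in A..X, (X - t) ^ (η + ξ - 1) * G t := by
  set μ : Measure ℝ := volume.restrict (Ioc A X) with hμ
  have haeX : ∀ᵐ t ∂μ, t ∈ Ioo A X := by
    rw [hμ, ← restrict_Ioo_eq_restrict_Ioc]
    exact ae_restrict_mem measurableSet_Ioo
  let f : ℝ → ℝ → ℝ := fun s t =>
    if t < s then (X - s) ^ (η - 1) * ((s - t) ^ (ξ - 1) * G t) else 0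
  have hmeas : Measurable (Function.uncurry f) := by
    have : Measurable G := hG.measurable
    apply Measurable.ite
    · exact measurableSet_lt measurable_snd measurable_fst
    · fun_prop
    · fun_prop
  have hinteg : Integrable (Function.uncurry f) (μ.prod μ) := by
    rw [integrable_prod_iff' hmeas.aestronglyMeasurable]
    constructor
    · filter_upwards [haeX] with t ht
      exact (slice_int hη hξ ht (G t)).1
    · have h1 : IntervalIntegrable (fun t => Gamma η * Gamma ξ / Gamma (η + ξ) *
          ((X - t) ^ (η + ξ - 1) * |G t|)) volume A X :=
        (sing_integrable (add_pos hη hξ) hG.abs.continuousOn).const_mul _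
      rw [intervalIntegrable_iff_integrableOn_Ioc_of_le h.le] at h1
      refine h1.congr ?_
      filter_upwards [haeX] with t ht
      rw [← (slice_int hη hξ ht |G t|).2]
      apply setIntegral_congr_fun measurableSet_Ioc
      intro s hs
      simp only [Function.uncurry, f]
      split_ifs with hts
      · rw [Real.norm_eq_abs, abs_mul, abs_mul,
          abs_of_nonneg (Real.rpow_nonneg (by linarith [hs.2]) _),
          abs_of_nonneg (Real.rpow_nonneg (by linarith) _)]
      · simp
  have hswap := integral_integral_swap hinteg
  have hL : ∫ s, ∫ t, f s t ∂μ ∂μ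
      = ∫ s in A..X, (X - s) ^ (η - 1) * ∫ t in A..s, (s - t) ^ (ξ - 1) * G t := by
    rw [intervalIntegral.integral_of_le h.le]
    apply setIntegral_congr_fun measurableSet_Ioc
    intro s hs
    simp only
    have e : (fun t => f s t)
        = indicator (Iio s) (fun t => (X - s) ^ (η - 1) * ((s - t) ^ (ξ - 1) * G t)) := by
      ext t
      simp only [f, indicator, mem_Iio]
    have e2 : Ioc A X ∩ Iio s = Ioo A s := by
      ext t; simp only [mem_inter_iff, mem_Ioc, mem_Iio, mem_Ioo]
      constructor
      · rintro ⟨⟨h1, _⟩, h'⟩; exact ⟨h1, h'⟩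
      · rintro ⟨h1, h'⟩; exact ⟨⟨h1, h'.le.trans hs.2⟩, h'⟩
    rw [e, hμ, setIntegral_indicator measurableSet_Iio, e2, ← integral_Ioc_eq_integral_Ioo,
      ← intervalIntegral.integral_of_le hs.1.le, intervalIntegral.integral_const_mul]
  have hR : ∫ t, ∫ s, f s t ∂μ ∂μ
      = Gamma η * Gamma ξ / Gamma (η + ξ) * ∫ t in A..X, (X - t) ^ (η + ξ - 1) * G t := by
    rw [← intervalIntegral.integral_const_mul, intervalIntegral.integral_of_le h.le]
    apply integral_congr_ae
    filter_upwards [haeX] with t ht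
    exact (slice_int hη hξ ht (G t)).2
  rw [← hL, ← hR, hswap]

lemma rlI_pos {A γ : ℝ} (hγ : 0 < γ) (G : ℝ → ℝ) (X : ℝ) :
    rlI A γ G X = (Gamma γ)⁻¹ * ∫ t in A..X, (X - t) ^ (γ - 1) * G t := by
  rw [rlI, if_neg hγ.ne']

lemma rlI_semigroup {η ξ : ℝ} (hη : 0 < η) (hξ : 0 < ξ) {A X : ℝ} (h : A < X) {G : ℝ → ℝ}
    (hG : Continuous G) :
    rlI A η (rlI A ξ G) X = rlI A (η + ξ) G X := by
  rw [rlI_pos hη, rlI_pos (add_pos hη hξ)]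
  have h1 := (Gamma_pos_of_pos hη).ne'
  have h2 := (Gamma_pos_of_pos hξ).ne'
  have h3 := (Gamma_pos_of_pos (add_pos hη hξ)).ne'
  have : ∀ s, (X - s) ^ (η - 1) * rlI A ξ G s
      = (Gamma ξ)⁻¹ * ((X - s) ^ (η - 1) * ∫ t in A..s, (s - t) ^ (ξ - 1) * G t) := by
    intro s
    rw [rlI_pos hξ]; ring
  simp only [this]
  rw [intervalIntegral.integral_const_mul, semigroup hη hξ h hG]
  field_simp

lemma rlI_const {γ : ℝ} (hγ : 0 < γ) (A X c : ℝ) :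
    rlI A γ (fun _ => c) X = c * (X - A) ^ γ / Gamma (γ + 1) := by
  rw [rlI_pos hγ, intervalIntegral.integral_mul_const,
    intervalIntegral.integral_comp_sub_left (fun x => x ^ (γ - 1)) X, sub_self,
    integral_rpow (Or.inl (by linarith)), Gamma_add_one hγ.ne']
  have h1 := (Gamma_pos_of_pos hγ).ne'
  rw [sub_add_cancel, Real.zero_rpow hγ.ne']
  field_simp
  ring

lemma rlI_continuousOn {γ : ℝ} (hγ : 0 < γ) (A : ℝ) {G : ℝ → ℝ} (hG : Continuous G) :
    ContinuousOn (rlI A γ G) (Ici A) := by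
  have key : ∀ X ∈ Ici A, rlI A γ G X
      = (Gamma γ)⁻¹ * ((X - A) ^ γ * ∫ u in (0:ℝ)..1, (1 - u) ^ (γ - 1) * G (A + (X - A) * u)) := by
    intro X hX
    rw [rlI_pos hγ]
    congr 1
    rcases eq_or_lt_of_le (show A ≤ X from hX) with rfl | hlt
    · simp [Real.zero_rpow hγ.ne']
    have hp : 0 < X - A := sub_pos.2 hlt
    have := intervalIntegral.integral_comp_add_mul (a := 0) (b := 1)
      (fun t => (X - t) ^ (γ - 1) * G t) hp.ne' A
    simp only [mul_zero, add_zero, mul_one, add_sub_cancel, smul_eq_mul] at this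
    have h2 : ∫ t in A..X, (X - t) ^ (γ - 1) * G t
        = (X - A) * ∫ u in (0:ℝ)..1, (X - (A + (X - A) * u)) ^ (γ - 1) * G (A + (X - A) * u) := by
      rw [this]; field_simp
    rw [h2]
    have h3 : (X - A) ^ γ = (X - A) * (X - A) ^ (γ - 1) := by
      rw [Real.rpow_sub_one hp.ne']; field_simp
    rw [h3, mul_assoc]
    congr 1
    rw [← intervalIntegral.integral_const_mul]
    apply intervalIntegral.integral_congr
    intro u hu
    rw [uIcc_of_le zero_le_one] at hu
    simp only
    rw [show X - (A + (X - A) * u) = (X - A) * (1 - u) by ring,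
      Real.mul_rpow hp.le (by linarith [hu.2])]
    ring
  refine ContinuousOn.congr ?_ key
  apply Continuous.continuousOn
  apply Continuous.mul continuous_const
  apply Continuous.mul
  · exact (continuous_id.sub continuous_const).rpow_const (fun _ => Or.inr hγ.le)
  · rw [continuous_iff_continuousAt]
    intro X₀
    have hc : IsCompact ((fun p : ℝ × ℝ => G (A + (p.1 - A) * p.2)) ''
        (Icc (X₀ - 1) (X₀ + 1) ×ˢ Icc (0:ℝ) 1)) :=
      (isCompact_Icc.prod isCompact_Icc).image (by fun_prop)
    obtain ⟨M, hM⟩ := hc.isBounded.exists_norm_le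
    apply intervalIntegral.continuousAt_of_dominated_interval
      (bound := fun u => (1 - u) ^ (γ - 1) * M)
    · filter_upwards with X
      apply Measurable.aestronglyMeasurable
      have : Measurable G := hG.measurable
      fun_prop
    · filter_upwards [Icc_mem_nhds (show X₀ - 1 < X₀ by linarith) (show X₀ < X₀ + 1 by linarith)]
        with X hX
      filter_upwards with u hu
      rw [uIoc_of_le zero_le_one] at hu
      rw [norm_mul, Real.norm_of_nonneg (Real.rpow_nonneg (by linarith [hu.2]) _)]
      apply mul_le_mul_of_nonneg_left _ (Real.rpow_nonneg (by linarith [hu.2]) _)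
      exact hM _ ⟨(X, u), ⟨hX, ⟨hu.1.le, hu.2⟩⟩, rfl⟩
    · exact sing_integrable hγ continuousOn_const
    · filter_upwards with u hu
      fun_prop

/-- Closed form for `D I^γ F`. -/
lemma rlI_hasDerivAt {γ : ℝ} (hγ : 0 < γ) {A X : ℝ} (h : A < X) {F F' : ℝ → ℝ}
    (hF : ∀ s, HasDerivAt F (F' s) s) (hF' : Continuous F') :
    HasDerivAt (rlI A γ F) (F A * (X - A) ^ (γ - 1) / Gamma γ + rlI A γ F' X) X := by
  have hFc : Continuous F := continuous_iff_continuousAt.2 fun s => (hF s).continuousAt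
  have e1 : ∀ s, F s = F A + rlI A 1 F' s := by
    intro s
    rw [rlI_pos one_pos]
    simp only [sub_self, Real.rpow_zero, one_mul, Gamma_one, inv_one]
    rw [intervalIntegral.integral_eq_sub_of_hasDerivAt (fun x _ => hF x)
      (hF'.intervalIntegrable _ _)]
    ring
  have hc1 : Continuous (rlI A 1 F') := by
    have : rlI A 1 F' = fun s => F s - F A := by ext s; rw [e1 s]; ring
    rw [this]; fun_prop
  have e2 : ∀ Y, A < Y → rlI A γ F Y
      = F A * (Y - A) ^ γ / Gamma (γ + 1) + ∫ s in A..Y, rlI A γ F' s := by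
    intro Y hY
    have : ∫ s in A..Y, rlI A γ F' s = rlI A 1 (rlI A γ F') Y := by
      rw [rlI_pos one_pos]; simp
    rw [this, rlI_semigroup one_pos hγ hY hF', add_comm 1 γ, ← rlI_semigroup hγ one_pos hY hF',
      ← rlI_const hγ, rlI_pos hγ, rlI_pos hγ, rlI_pos hγ, ← mul_add,
      ← intervalIntegral.integral_add (sing_integrable hγ continuousOn_const)
        (sing_integrable hγ hc1.continuousOn)]
    congr 1
    apply intervalIntegral.integral_congr
    intro s _
    simp only
    rw [e1 s]
    ring
  have hd : HasDerivAt (fun Y => F A * (Y - A) ^ γ / Gamma (γ + 1) + ∫ s in A..Y, rlI A γ F' s)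
      (F A * (X - A) ^ (γ - 1) / Gamma γ + rlI A γ F' X) X := by
    apply HasDerivAt.add
    · have := (((hasDerivAt_id X).sub_const A).rpow_const (p := γ)
        (Or.inl (sub_pos.2 h).ne')).const_mul (F A) |>.div_const (Gamma (γ + 1))
      refine this.congr_deriv ?_
      rw [Gamma_add_one hγ.ne']
      have h1 := (Gamma_pos_of_pos hγ).ne'
      simp only [id]
      field_simp
    · have hco := rlI_continuousOn hγ A hF'
      apply intervalIntegral.integral_hasDerivAt_right
      · apply ContinuousOn.intervalIntegrable
        rw [uIcc_of_le h.le]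
        exact hco.mono Icc_subset_Ici_self
      · exact (hco.mono Ioi_subset_Ici_self).stronglyMeasurableAtFilter isOpen_Ioi X h
      · exact hco.continuousAt (Ici_mem_nhds h)
  refine hd.congr_of_eventuallyEq ?_
  filter_upwards [Ioi_mem_nhds h] with Y hY
  exact e2 Y hY

/-- Power function under the fractional integral. -/
lemma rlI_power_add {η ξ : ℝ} (hη : 0 < η) (hξ : 0 < ξ) {A X : ℝ} (h : A < X) {G : ℝ → ℝ}
    (hG : Continuous G) (c : ℝ) :
    rlI A η (fun s => c * (s - A) ^ (ξ - 1) / Gamma ξ + rlI A ξ G s) X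
      = c * (X - A) ^ (η + ξ - 1) / Gamma (η + ξ) + rlI A (η + ξ) G X := by
  rw [← rlI_semigroup hη hξ h hG, rlI_pos hη, rlI_pos hη]
  have e : ∀ s, (X - s) ^ (η - 1) * (c * (s - A) ^ (ξ - 1) / Gamma ξ + rlI A ξ G s)
      = (X - s) ^ (η - 1) * (s - A) ^ (ξ - 1) * (c / Gamma ξ)
        + (X - s) ^ (η - 1) * rlI A ξ G s := by
    intro s; ring
  simp only [e]
  rw [intervalIntegral.integral_add ((beta_integrable hη hξ h).mul_const _)
    (sing_integrable hη ?_), intervalIntegral.integral_mul_const, beta_int hη hξ h, mul_add]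
  · congr 1
    have h1 := (Gamma_pos_of_pos hη).ne'
    have h2 := (Gamma_pos_of_pos hξ).ne'
    field_simp
  · rw [uIcc_of_le h.le]
    exact (rlI_continuousOn hξ A hG).mono Icc_subset_Ici_self

end LTR

namespace LTR

open Set Filter Topology MeasureTheory

lemma genBinom_zero (γ : ℝ) : genBinom γ 0 = 1 := by simp [genBinom]

lemma genBinom_succ (γ : ℝ) (n : ℕ) :
    genBinom γ (n + 1) = genBinom γ n * ((γ - n) / (n + 1)) := by
  rw [genBinom, genBinom, Finset.prod_range_succ, Nat.factorial_succ]
  push_cast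
  have : (n.factorial : ℝ) ≠ 0 := by positivity
  field_simp

lemma genBinom_abs_le {γ : ℝ} (h0 : -1 ≤ γ) (h1 : γ ≤ 1) (n : ℕ) : |genBinom γ n| ≤ 1 := by
  induction n with
  | zero => simp [genBinom_zero]
  | succ n ih =>
    rw [genBinom_succ, abs_mul]
    apply mul_le_one₀ ih (abs_nonneg _)
    have hn : (0:ℝ) ≤ n := Nat.cast_nonneg n
    rw [abs_div, abs_of_pos (show (0:ℝ) < n + 1 by positivity), div_le_one (by positivity), abs_le]
    rcases Nat.eq_zero_or_pos n with rfl | hp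
    · simp; constructor <;> linarith
    · have : (1:ℝ) ≤ n := by exact_mod_cast hp
      constructor <;> linarith

lemma genBinom_eq_choose (γ : ℝ) (n : ℕ) : genBinom γ n = Ring.choose γ n := by
  induction n with
  | zero => simp [genBinom_zero]
  | succ n ih =>
    have h1 := Ring.descPochhammer_eq_factorial_smul_choose γ (n + 1)
    have h2 := Ring.descPochhammer_eq_factorial_smul_choose γ n
    rw [descPochhammer_succ_right, Polynomial.smeval_mul, h2] at h1
    rw [genBinom_succ, ih]
    simp [Polynomial.smeval_sub, Polynomial.smeval_natCast, Nat.factorial_succ] at h1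
    have : (n.factorial : ℝ) ≠ 0 := by positivity
    have h3 : Ring.choose γ n * (γ - n) = (n + 1) * Ring.choose γ (n + 1) := by
      apply mul_left_cancel₀ this
      linear_combination h1
    field_simp
    linear_combination h3

lemma vandermonde (p q : ℝ) (m : ℕ) :
    ∑ x ∈ Finset.HasAntidiagonal.antidiagonal m, genBinom p x.1 * genBinom q x.2 = genBinom (p + q) m := by
  simp only [genBinom_eq_choose]
  exact (Ring.add_choose_eq m (Commute.all p q)).symm

lemma entire_taylor {h : ℝ → ℝ} (hh : EntireReal h) (X y : ℝ) :
    HasSum (fun m : ℕ => iteratedDeriv m h X / m.factorial * y ^ m) (h (X + y)) := by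
  obtain ⟨p, hp⟩ := hh
  have h1 := hp.changeOrigin (y := X) (by simp)
  rw [zero_add, ENNReal.top_sub (by simp)] at h1
  have h2 := h1.hasSum_iteratedFDeriv (y := y) (by simp)
  have e : (fun m : ℕ => iteratedDeriv m h X / m.factorial * y ^ m)
      = fun m : ℕ => ((m.factorial : ℝ))⁻¹ • iteratedFDeriv ℝ m h X fun _ => y := by
    funext m
    rw [iteratedFDeriv_apply_eq_iteratedDeriv_mul_prod]
    simp
    ring
  rw [e]
  exact h2

lemma entire_contDiff {h : ℝ → ℝ} (hh : EntireReal h) : ContDiff ℝ ⊤ h := by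
  obtain ⟨p, hp⟩ := hh
  have := hp.analyticOnNhd
  simp at this
  exact this.contDiff.of_le le_top

lemma entire_summable {h : ℝ → ℝ} (hh : EntireReal h) (X : ℝ) {R : ℝ} (hR : 0 ≤ R) :
    Summable (fun m : ℕ => |iteratedDeriv m h X| / m.factorial * R ^ m) := by
  have := (entire_taylor hh X R).summable.abs
  refine this.congr fun m => ?_
  rw [abs_mul, abs_div, abs_of_nonneg (pow_nonneg hR m), Nat.abs_cast]

lemma double_sum {p q : ℝ} (hp : |p| ≤ 1) (hq : |q| ≤ 1) {T : ℕ → ℝ}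
    (hT : Summable (fun m : ℕ => (m + 1) * |T m|)) {S : ℝ}
    (hS : HasSum (fun m => genBinom (p + q) m * T m) S) :
    (∀ l : ℕ, Summable (fun n : ℕ => genBinom p n * genBinom q l * T (n + l))) ∧
    Summable (fun l : ℕ => ∑' n : ℕ, genBinom p n * genBinom q l * T (n + l)) ∧
    ∑' l : ℕ, ∑' n : ℕ, genBinom p n * genBinom q l * T (n + l) = S := by
  let f : ℕ × ℕ → ℝ := fun x => genBinom p x.1 * genBinom q x.2 * T (x.1 + x.2)
  have hb : Summable (fun x : ℕ × ℕ => |T (x.1 + x.2)|) := by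
    rw [← Finset.HasAntidiagonal.sigmaAntidiagonalEquivProd.summable_iff]
    rw [summable_sigma_of_nonneg (fun _ => by simp only [Function.comp]; exact abs_nonneg _)]
    constructor
    · intro n; exact (hasSum_fintype _).summable
    · refine hT.congr fun m => ?_
      rw [tsum_fintype]
      have : ∀ x : Finset.HasAntidiagonal.antidiagonal m,
          ((fun x : ℕ × ℕ => |T (x.1 + x.2)|) ∘
            Finset.HasAntidiagonal.sigmaAntidiagonalEquivProd) ⟨m, x⟩ = |T m| := by
        rintro ⟨x, hx⟩
        rw [Finset.HasAntidiagonal.mem_antidiagonal] at hx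
        simp [hx]
      rw [Finset.sum_congr rfl (fun x _ => this x)]
      simp
  have hf : Summable f := by
    apply Summable.of_norm_bounded hb
    intro x
    simp only [f, Real.norm_eq_abs, abs_mul]
    have h1 := genBinom_abs_le (abs_le.1 hp).1 (abs_le.1 hp).2 x.1
    have h2 := genBinom_abs_le (abs_le.1 hq).1 (abs_le.1 hq).2 x.2
    have h3 := mul_le_one₀ h1 (abs_nonneg _) h2
    calc _ ≤ 1 * |T (x.1 + x.2)| := mul_le_mul_of_nonneg_right h3 (abs_nonneg _)
      _ = _ := one_mul _
  have hfs : Summable (fun x : ℕ × ℕ => f x.swap) := hf.prod_symm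
  have hval : ∑' x, f x = S := by
    rw [← Finset.HasAntidiagonal.sigmaAntidiagonalEquivProd.tsum_eq f]
    have h4 : Summable (fun x => f (Finset.HasAntidiagonal.sigmaAntidiagonalEquivProd x)) :=
      Finset.HasAntidiagonal.sigmaAntidiagonalEquivProd.summable_iff.2 hf
    rw [h4.tsum_sigma' (fun n => (hasSum_fintype _).summable), ← hS.tsum_eq]
    congr 1
    ext m
    rw [tsum_fintype, ← vandermonde, Finset.sum_mul]
    have : ∀ x : Finset.HasAntidiagonal.antidiagonal m,
        f (Finset.HasAntidiagonal.sigmaAntidiagonalEquivProd ⟨m, x⟩)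
          = genBinom p x.1.1 * genBinom q x.1.2 * T m := by
      rintro ⟨x, hx⟩
      rw [Finset.HasAntidiagonal.mem_antidiagonal] at hx
      simp [f, hx]
    rw [Finset.sum_congr rfl (fun x _ => this x)]
    exact Finset.sum_coe_sort (Finset.HasAntidiagonal.antidiagonal m)
      (fun x => genBinom p x.1 * genBinom q x.2 * T m)
  refine ⟨fun l => hfs.prod_factor l, hfs.prod, ?_⟩
  rw [← hval, ← (Equiv.prodComm ℕ ℕ).tsum_eq f]
  exact (hfs.tsum_prod).symm

lemma gamma_lower {α : ℝ} (h0 : 0 < α) (h1 : α < 1) (m : ℕ) :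
    Gamma (1 - α) * (1 - α) ^ m * m.factorial ≤ Gamma (m + 1 - α) := by
  induction m with
  | zero => simp
  | succ m ih =>
    have e : ((m + 1 : ℕ) : ℝ) + 1 - α = (m + 1 - α) + 1 := by push_cast; ring
    have hm : (0:ℝ) ≤ m := Nat.cast_nonneg m
    have hp : 0 < (m:ℝ) + 1 - α := by linarith
    rw [e, Gamma_add_one hp.ne', pow_succ, Nat.factorial_succ]
    push_cast
    have h2 : (1 - α) * ((m:ℝ) + 1) ≤ m + 1 - α := by nlinarith
    have hg := Gamma_pos_of_pos (show 0 < 1 - α by linarith)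
    have h3 : 0 < Gamma (1 - α) * (1 - α) ^ m * m.factorial := by
      have : 0 < 1 - α := by linarith
      positivity
    calc Gamma (1 - α) * ((1 - α) ^ m * (1 - α)) * (((m:ℝ) + 1) * m.factorial)
        = ((1 - α) * ((m:ℝ) + 1)) * (Gamma (1 - α) * (1 - α) ^ m * m.factorial) := by ring
      _ ≤ (m + 1 - α) * Gamma (m + 1 - α) := mul_le_mul h2 ih h3.le hp.le

lemma gamma_binom {α : ℝ} (h1 : α < 1) (m : ℕ) :
    genBinom α (m + 1) * Gamma (1 - α) * (m + 1).factorial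
      = α * (-1) ^ m * Gamma (m + 1 - α) := by
  induction m with
  | zero => simp [genBinom_succ, genBinom_zero]
  | succ m ih =>
    have e : ((m + 1 : ℕ) : ℝ) + 1 - α = (m + 1 - α) + 1 := by push_cast; ring
    have hm : (0:ℝ) ≤ m := Nat.cast_nonneg m
    have hp : 0 < (m:ℝ) + 1 - α := by linarith
    rw [e, Gamma_add_one hp.ne', genBinom_succ, Nat.factorial_succ]
    push_cast
    have : (m:ℝ) + 1 + 1 ≠ 0 := by positivity
    field_simp
    rw [pow_succ]
    linear_combination (α - (m + 1)) * ih

end LTR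

namespace LTR

open Set Filter Topology MeasureTheory

/-- Closed form of the classical Riemann–Liouville derivative of order `α ∈ (0,1)`. -/
noncomputable def clD (A α : ℝ) (w : ℝ → ℝ) (X : ℝ) : ℝ :=
  w A * (X - A) ^ (-α) / Gamma (1 - α) + rlI A (1 - α) (deriv w) X

lemma leib1 {α : ℝ} (h1 : α < 1) {A X : ℝ} (hAX : A < X) {h w : ℝ → ℝ}
    (hh : ContDiff ℝ ⊤ h) (hw : ContDiff ℝ ⊤ w) :
    clD A α (fun s => h s * w s) X = h X * clD A α w X
      + (-α / Gamma (1 - α)) * ∫ s in A..X, (X - s) ^ (-α - 1) * ((h s - h X) * w s) := by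
  have hhd : Differentiable ℝ h := hh.differentiable (by simp)
  have hwd : Differentiable ℝ w := hw.differentiable (by simp)
  have hhc : Continuous (deriv h) := hh.continuous_deriv (by simp)
  have hwc : Continuous (deriv w) := hw.continuous_deriv (by simp)
  have hα : 0 < 1 - α := by linarith
  have hhcont : Continuous h := hhd.continuous
  have hwcont : Continuous w := hwd.continuous
  have hk : Continuous (dslope h X) := by
    rw [continuous_iff_continuousAt]
    intro s
    by_cases hs : s = X
    · subst hs
      exact continuousAt_dslope_same.2 (hhd s)
    · exact (continuousAt_dslope_of_ne hs).2 hhd.continuous.continuousAt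
  have hkey : ∀ s, h s - h X = (s - X) * dslope h X s := by
    intro s
    have := sub_smul_dslope h X s
    rw [← this, smul_eq_mul]
  let φ : ℝ → ℝ := fun s => (X - s) ^ (-α) * ((h s - h X) * w s)
  let ψ₁ : ℝ → ℝ := fun s => (X - s) ^ (-α - 1) * ((h s - h X) * w s)
  let ψ₂ : ℝ → ℝ := fun s => (X - s) ^ ((1 - α) - 1) *
    (deriv h s * w s + (h s - h X) * deriv w s)
  have hexp : (1 - α) - 1 = -α := by ring
  have i1 : IntervalIntegrable ψ₁ volume A X := by
    have h2 : IntervalIntegrable (fun s => (X - s) ^ ((1 - α) - 1) * (-(dslope h X s * w s)))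
      volume A X := sing_integrable hα (Continuous.continuousOn (by fun_prop))
    refine h2.congr_ae ?_
    rw [uIoc_of_le hAX.le, ← restrict_Ioo_eq_restrict_Ioc]
    filter_upwards [ae_restrict_mem measurableSet_Ioo] with s hs
    have hp : 0 < X - s := sub_pos.2 hs.2
    simp only [ψ₁]
    rw [hkey, hexp, Real.rpow_sub_one hp.ne']
    field_simp
    ring
  have i2 : IntervalIntegrable ψ₂ volume A X := sing_integrable hα (Continuous.continuousOn (by fun_prop))
  have hcont : ContinuousOn φ (Icc A X) := by
    have h2 : ContinuousOn (fun s => -((X - s) ^ (1 - α) * (dslope h X s * w s))) (Icc A X) := by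
      apply Continuous.continuousOn
      apply Continuous.neg
      apply Continuous.mul
      · exact (continuous_const.sub continuous_id).rpow_const (fun _ => Or.inr hα.le)
      · fun_prop
    refine h2.congr fun s hs => ?_
    simp only [φ]
    rcases eq_or_lt_of_le hs.2 with rfl | hlt
    · simp [Real.zero_rpow hα.ne']
    · have hp : 0 < X - s := sub_pos.2 hlt
      rw [hkey, show 1 - α = -α + 1 by ring, Real.rpow_add_one hp.ne']
      ring
  have hder : ∀ s ∈ Ioo A X, HasDerivAt φ (α * ψ₁ s + ψ₂ s) s := by
    intro s hs
    have hp : 0 < X - s := sub_pos.2 hs.2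
    have d1 := ((hasDerivAt_id s).const_sub X).rpow_const (p := -α) (Or.inl hp.ne')
    have d2 := ((hhd s).hasDerivAt.sub_const (h X)).mul (hwd s).hasDerivAt
    refine (d1.mul d2).congr_deriv ?_
    simp only [ψ₁, ψ₂, hexp, id, Pi.mul_apply]
    ring
  have hftc := intervalIntegral.integral_eq_sub_of_hasDerivAt_of_le hAX.le hcont hder
    ((i1.const_mul α).add i2)
  rw [intervalIntegral.integral_add (i1.const_mul α) i2, intervalIntegral.integral_const_mul] at hftc
  have hφX : φ X = 0 := by simp [φ]
  rw [hφX] at hftc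
  -- split the full derivative
  have i3 : IntervalIntegrable (fun s => (X - s) ^ ((1 - α) - 1) * deriv w s) volume A X :=
    sing_integrable hα (Continuous.continuousOn (by fun_prop))
  have hsplit : ∫ s in A..X, (X - s) ^ ((1 - α) - 1) * deriv (fun s => h s * w s) s
      = (∫ s in A..X, ψ₂ s) + h X * ∫ s in A..X, (X - s) ^ ((1 - α) - 1) * deriv w s := by
    rw [← intervalIntegral.integral_const_mul, ← intervalIntegral.integral_add i2 (i3.const_mul _)]
    apply intervalIntegral.integral_congr
    intro s _
    simp only [ψ₂]
    rw [deriv_fun_mul (hhd s) (hwd s)]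
    ring
  rw [clD, clD, rlI_pos hα, rlI_pos hα, hsplit]
  have hg := (Gamma_pos_of_pos hα).ne'
  have : ∫ s in A..X, ψ₂ s = -(φ A) - α * ∫ s in A..X, ψ₁ s := by linarith
  rw [this]
  simp only [φ, ψ₁]
  field_simp
  ring

/-- The terms of the Leibniz series. -/
noncomputable def RD (A α : ℝ) (w : ℝ → ℝ) (X : ℝ) : ℕ → ℝ
  | 0 => clD A α w X
  | (m + 1) => rlI A (m + 1 - α) w X

lemma term_bound {α : ℝ} (h1 : α < 1) {A X : ℝ} {w : ℝ → ℝ}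
    (m : ℕ) {s : ℝ} (hs : s ∈ Ioc A X) :
    |(X - s) ^ ((m:ℝ) + 1 - α - 1) * w s|
      ≤ (X - A) ^ m * ((X - s) ^ ((1 - α) - 1) * |w s|) := by
  have hp : 0 ≤ X - s := sub_nonneg.2 hs.2
  rw [abs_mul, abs_of_nonneg (Real.rpow_nonneg hp _), ← mul_assoc]
  apply mul_le_mul_of_nonneg_right _ (abs_nonneg _)
  rcases eq_or_lt_of_le hp with h0 | hpos
  · rw [← h0]
    rcases Nat.eq_zero_or_pos m with rfl | hm
    · simp
    · have hm' : (1:ℝ) ≤ m := by exact_mod_cast hm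
      rw [Real.zero_rpow (by linarith)]
      have : 0 ≤ X - A := by linarith [hs.1, hs.2]
      have := Real.rpow_nonneg le_rfl ((1 - α) - 1)
      positivity
  · rw [show (m:ℝ) + 1 - α - 1 = ((1 - α) - 1) + m by ring, Real.rpow_add_natCast hpos.ne',
      mul_comm]
    apply mul_le_mul_of_nonneg_right _ (Real.rpow_nonneg hp _)
    exact pow_le_pow_left₀ hp (by linarith [hs.1]) m

lemma term_integrable {α : ℝ} (h1 : α < 1) {A X : ℝ} {w : ℝ → ℝ}
    (hw : Continuous w) (m : ℕ) :
    IntervalIntegrable (fun s => (X - s) ^ ((m:ℝ) + 1 - α - 1) * w s) volume A X := by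
  have hm : (0:ℝ) ≤ m := Nat.cast_nonneg m
  exact sing_integrable (by linarith) hw.continuousOn

lemma RD_bound {α : ℝ} (h1 : α < 1) {A X : ℝ} (hAX : A < X) {w : ℝ → ℝ}
    (hw : Continuous w) (m : ℕ) :
    |RD A α w X (m + 1)| ≤ (Gamma (m + 1 - α))⁻¹ *
      ((X - A) ^ m * ∫ s in A..X, (X - s) ^ ((1 - α) - 1) * |w s|) := by
  have hm : (0:ℝ) ≤ m := Nat.cast_nonneg m
  have hp : 0 < (m:ℝ) + 1 - α := by linarith
  have hα : 0 < 1 - α := by linarith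
  rw [RD, rlI_pos hp, abs_mul, abs_of_pos (inv_pos.2 (Gamma_pos_of_pos hp))]
  apply mul_le_mul_of_nonneg_left _ (inv_pos.2 (Gamma_pos_of_pos hp)).le
  rw [← intervalIntegral.integral_const_mul]
  rw [← Real.norm_eq_abs]
  apply intervalIntegral.norm_integral_le_of_norm_le hAX.le
  · filter_upwards with s hs
    exact term_bound h1 m hs
  · exact (sing_integrable hα hw.abs.continuousOn).const_mul _

lemma leib2 {α : ℝ} (h1 : α < 1) {A X : ℝ} (hAX : A < X) {h w : ℝ → ℝ}
    (hh : EntireReal h) (hw : EntireReal w) :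
    HasSum (fun m : ℕ => genBinom α m * (iteratedDeriv m h X * RD A α w X m))
      (clD A α (fun s => h s * w s) X) := by
  have hhC := entire_contDiff hh
  have hwC := entire_contDiff hw
  have hwc : Continuous w := hwC.continuous
  have hα : 0 < 1 - α := by linarith
  have hg := (Gamma_pos_of_pos hα).ne'
  rw [leib1 h1 hAX hhC hwC]
  have hzero : genBinom α 0 * (iteratedDeriv 0 h X * RD A α w X 0) = h X * clD A α w X := by
    simp [genBinom_zero, RD]
  rw [← hasSum_nat_add_iff' 1]
  simp only [Finset.range_one, Finset.sum_singleton, hzero, add_sub_cancel_left]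
  let c : ℕ → ℝ := fun m => iteratedDeriv m h X / m.factorial
  have hL : 0 ≤ X - A := (sub_pos.2 hAX).le
  have hsum : HasSum (fun m : ℕ => ∫ s in A..X,
        c (m + 1) * (-1) ^ (m + 1) * ((X - s) ^ ((m:ℝ) + 1 - α - 1) * w s))
      (∫ s in A..X, (X - s) ^ (-α - 1) * ((h s - h X) * w s)) := by
    have hsm : Summable (fun m : ℕ => |c (m + 1)| * (X - A) ^ m) := by
      have h2 := (summable_nat_add_iff 1).2 (entire_summable hh X hL)
      have h3 := h2.mul_right (X - A)⁻¹
      refine h3.congr fun m => ?_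
      simp only [c]
      rw [abs_div, Nat.abs_cast, pow_succ]
      have : X - A ≠ 0 := (sub_pos.2 hAX).ne'
      field_simp
    apply intervalIntegral.hasSum_integral_of_dominated_convergence
      (fun m s => |c (m + 1)| * (X - A) ^ m * ((X - s) ^ ((1 - α) - 1) * |w s|))
    · intro m
      have := ((term_integrable h1 hwc m (A := A) (X := X)).const_mul
        (c (m + 1) * (-1) ^ (m + 1)))
      rw [intervalIntegrable_iff] at this
      exact this.aestronglyMeasurable
    · intro m
      filter_upwards with s hs
      rw [uIoc_of_le hAX.le] at hs
      rw [Real.norm_eq_abs, abs_mul, abs_mul, abs_pow, abs_neg, abs_one, one_pow, mul_one, mul_assoc]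
      exact mul_le_mul_of_nonneg_left (term_bound h1 m hs) (abs_nonneg _)
    · filter_upwards with s hs
      exact hsm.mul_right _
    · simp only [tsum_mul_right]
      exact (sing_integrable hα hwc.abs.continuousOn).const_mul _
    · have hne : ∀ᵐ s : ℝ, s ≠ X := by simp [ae_iff]
      filter_upwards [hne] with s hsX hs
      rw [uIoc_of_le hAX.le] at hs
      have hp : 0 < X - s := sub_pos.2 (lt_of_le_of_ne hs.2 hsX)
      have h2 := entire_taylor hh X (s - X)
      rw [← hasSum_nat_add_iff' 1] at h2
      simp only [Finset.range_one, Finset.sum_singleton, add_sub_cancel] at h2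
      have h3 := (h2.mul_right (w s)).mul_left ((X - s) ^ (-α - 1))
      simp only [iteratedDeriv_zero, Nat.factorial_zero, Nat.cast_one, div_one, pow_zero,
        mul_one] at h3
      refine h3.congr_fun ?_
      intro m
      simp only [c]
      rw [show (m:ℝ) + 1 - α - 1 = (-α - 1) + ((m + 1 : ℕ) : ℝ) by push_cast; ring,
        Real.rpow_add_natCast hp.ne', show s - X = (-1) * (X - s) by ring, mul_pow]
      ring
  have hfin := hsum.mul_left (-α / Gamma (1 - α))
  refine hfin.congr_fun ?_
  intro m
  rw [intervalIntegral.integral_const_mul]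
  have hm : (0:ℝ) ≤ m := Nat.cast_nonneg m
  have hp : 0 < (m:ℝ) + 1 - α := by linarith
  have hgm := (Gamma_pos_of_pos hp).ne'
  rw [RD, rlI_pos hp]
  simp only [c]
  have hb := gamma_binom h1 m
  have hfac : ((m + 1).factorial : ℝ) ≠ 0 := by positivity
  have hb' : genBinom α (m + 1)
      = α * (-1) ^ m * Gamma (m + 1 - α) / (Gamma (1 - α) * (m + 1).factorial) := by
    rw [eq_div_iff (by positivity)]
    linarith
  rw [hb', pow_succ]
  field_simp

lemma leib_summable {α : ℝ} (h0 : 0 < α) (h1 : α < 1) {A X : ℝ} (hAX : A < X) {h w : ℝ → ℝ}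
    (hh : EntireReal h) (hw : EntireReal w) :
    Summable (fun m : ℕ => ((m:ℝ) + 1) * |iteratedDeriv m h X * RD A α w X m|) := by
  have hwc : Continuous w := (entire_contDiff hw).continuous
  have hα : 0 < 1 - α := by linarith
  have hg := Gamma_pos_of_pos hα
  have hL : 0 < X - A := sub_pos.2 hAX
  rw [← summable_nat_add_iff 1]
  set K := ∫ s in A..X, (X - s) ^ ((1 - α) - 1) * |w s| with hK
  have hK0 : 0 ≤ K := by
    apply intervalIntegral.integral_nonneg hAX.le
    intro s hs
    exact mul_nonneg (Real.rpow_nonneg (sub_nonneg.2 hs.2) _) (abs_nonneg _)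
  set R := 4 * (1 - α)⁻¹ * (X - A) with hR
  have hR0 : 0 < R := by positivity
  have h2 := ((summable_nat_add_iff 1).2 (entire_summable hh X hR0.le)).mul_right
    (K / Gamma (1 - α) * (1 - α) / (X - A))
  refine Summable.of_nonneg_of_le (fun m => by positivity) (fun m => ?_) h2
  have hgl := gamma_lower h0 h1 m
  have hm : (0:ℝ) ≤ m := Nat.cast_nonneg m
  have hginv : (Gamma (m + 1 - α))⁻¹ ≤ (Gamma (1 - α) * (1 - α) ^ m * m.factorial)⁻¹ :=
    inv_anti₀ (by positivity) hgl
  have hb := RD_bound h1 hAX hwc m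
  rw [← hK] at hb
  have hb2 : |RD A α w X (m + 1)| ≤ (Gamma (1 - α) * (1 - α) ^ m * m.factorial)⁻¹ *
      ((X - A) ^ m * K) :=
    hb.trans (mul_le_mul_of_nonneg_right hginv (by positivity))
  have hpow : ((m:ℝ) + 2) * (m + 1) ≤ 4 ^ (m + 1) := by
    have a1 : (m:ℝ) + 2 ≤ 2 ^ (m + 1) := by
      have := Nat.lt_two_pow_self (n := m + 1)
      exact_mod_cast this
    have a2 : (m:ℝ) + 1 ≤ 2 ^ (m + 1) := by linarith
    calc ((m:ℝ) + 2) * (m + 1) ≤ 2 ^ (m + 1) * 2 ^ (m + 1) :=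
          mul_le_mul a1 a2 (by positivity) (by positivity)
      _ = 4 ^ (m + 1) := by rw [← mul_pow]; norm_num
  rw [abs_mul]
  calc (((m + 1 : ℕ) : ℝ) + 1) * (|iteratedDeriv (m + 1) h X| * |RD A α w X (m + 1)|)
      ≤ (((m + 1 : ℕ) : ℝ) + 1) * (|iteratedDeriv (m + 1) h X| *
        ((Gamma (1 - α) * (1 - α) ^ m * m.factorial)⁻¹ * ((X - A) ^ m * K))) := by gcongr
    _ = (((m:ℝ) + 2) * (m + 1)) * (|iteratedDeriv (m + 1) h X| / (m + 1).factorial *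
        (((1 - α)⁻¹ * (X - A)) ^ (m + 1) * (K / Gamma (1 - α) * (1 - α) / (X - A)))) := by
        rw [Nat.factorial_succ, mul_pow, inv_pow, pow_succ, pow_succ]
        push_cast
        field_simp
        ring
    _ ≤ 4 ^ (m + 1) * (|iteratedDeriv (m + 1) h X| / (m + 1).factorial *
        (((1 - α)⁻¹ * (X - A)) ^ (m + 1) * (K / Gamma (1 - α) * (1 - α) / (X - A)))) := by
        apply mul_le_mul_of_nonneg_right hpow
        positivity
    _ = _ := by
        have e : R ^ (m + 1) = 4 ^ (m + 1) * ((1 - α)⁻¹ * (X - A)) ^ (m + 1) := by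
          rw [← mul_pow, hR]
          congr 1
          ring
        rw [e]
        ring

end LTR

namespace LTR

open Set Filter Topology MeasureTheory

/-- Change of variables `s = Ψ t`. -/
lemma psiI_eq {a b : ℝ} {Ψ : ℝ → ℝ}
    (hmono : StrictMonoOn Ψ (Icc a b)) (hcont : ContinuousOn Ψ (Icc a b))
    (hpos : ∀ t ∈ Icc a b, 0 < deriv Ψ t) {y : ℝ} (hay : a ≤ y) (hyb : y ≤ b)
    (G : ℝ → ℝ) (γ : ℝ) :
    psiI a Ψ (fun t => G (Ψ t)) γ y = rlI (Ψ a) γ G (Ψ y) := by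
  unfold psiI rlI
  split_ifs with h0
  · rfl
  congr 1
  have hsub : Icc a y ⊆ Icc a b := Icc_subset_Icc_right hyb
  have hsub2 : Ioo a y ⊆ Icc a b := Ioo_subset_Icc_self.trans hsub
  have hle : Ψ a ≤ Ψ y :=
    hmono.monotoneOn (hsub (left_mem_Icc.2 hay)) (hsub (right_mem_Icc.2 hay)) hay
  have himg : Ψ '' Ioo a y = Ioo (Ψ a) (Ψ y) := by
    apply Subset.antisymm
    · rintro _ ⟨t, ht, rfl⟩
      exact ⟨hmono (hsub (left_mem_Icc.2 hay)) (hsub2 ht) ht.1,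
        hmono (hsub2 ht) (hsub (right_mem_Icc.2 hay)) ht.2⟩
    · exact intermediate_value_Ioo hay (hcont.mono hsub)
  rw [intervalIntegral.integral_of_le hay, intervalIntegral.integral_of_le hle,
    integral_Ioc_eq_integral_Ioo, integral_Ioc_eq_integral_Ioo, ← himg,
    integral_image_eq_integral_abs_deriv_smul measurableSet_Ioo
      (f' := deriv Ψ) _ (hmono.injOn.mono hsub2)]
  · apply setIntegral_congr_fun measurableSet_Ioo
    intro t ht
    simp only [smul_eq_mul]
    rw [abs_of_pos (hpos t (hsub2 ht)), mul_assoc]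
  · intro t ht
    exact (differentiableAt_of_deriv_ne_zero (hpos t (hsub2 ht)).ne').hasDerivAt.hasDerivWithinAt

lemma psiI_deriv {a b : ℝ} {Ψ : ℝ → ℝ}
    (hmono : StrictMonoOn Ψ (Icc a b)) (hcont : ContinuousOn Ψ (Icc a b))
    (hpos : ∀ t ∈ Icc a b, 0 < deriv Ψ t) {y : ℝ} (hy : y ∈ Ioo a b)
    {F : ℝ → ℝ} (hF : ContDiff ℝ ⊤ F) {γ : ℝ} (hγ : 0 < γ) :
    (deriv Ψ y)⁻¹ * deriv (fun z => psiI a Ψ (fun t => F (Ψ t)) γ z) y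
      = F (Ψ a) * (Ψ y - Ψ a) ^ (γ - 1) / Gamma γ + rlI (Ψ a) γ (deriv F) (Ψ y) := by
  have hyI := Ioo_subset_Icc_self hy
  have hp := hpos y hyI
  have hev : (fun z => psiI a Ψ (fun t => F (Ψ t)) γ z) =ᶠ[𝓝 y]
      (rlI (Ψ a) γ F) ∘ Ψ := by
    filter_upwards [Ioo_mem_nhds hy.1 hy.2] with z hz
    exact psiI_eq hmono hcont hpos hz.1.le hz.2.le F γ
  have hlt : Ψ a < Ψ y := hmono (left_mem_Icc.2 (hy.1.trans hy.2).le) hyI hy.1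
  have hd : Differentiable ℝ F := hF.differentiable (by simp)
  have h1 := rlI_hasDerivAt hγ hlt (fun s => (hd s).hasDerivAt) (hF.continuous_deriv (by simp))
  have h2 := h1.comp y (differentiableAt_of_deriv_ne_zero hp.ne').hasDerivAt
  rw [hev.deriv_eq, h2.deriv]
  field_simp

lemma psiI_deriv_zero {a b : ℝ} {Ψ : ℝ → ℝ}
    (hpos : ∀ t ∈ Icc a b, 0 < deriv Ψ t) {y : ℝ} (hy : y ∈ Ioo a b)
    {F : ℝ → ℝ} (hF : ContDiff ℝ ⊤ F) :
    (deriv Ψ y)⁻¹ * deriv (fun z => psiI a Ψ (fun t => F (Ψ t)) 0 z) y = deriv F (Ψ y) := by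
  have hp := hpos y (Ioo_subset_Icc_self hy)
  have hd : Differentiable ℝ F := hF.differentiable (by simp)
  have h2 := (hd (Ψ y)).hasDerivAt.comp y (differentiableAt_of_deriv_ne_zero hp.ne').hasDerivAt
  have : (fun z => psiI a Ψ (fun t => F (Ψ t)) 0 z) = F ∘ Ψ := by
    funext z
    simp [psiI]
  rw [this, h2.deriv]
  field_simp

lemma psiRLD_eq {a b : ℝ} {Ψ : ℝ → ℝ}
    (hmono : StrictMonoOn Ψ (Icc a b)) (hcont : ContinuousOn Ψ (Icc a b))
    (hpos : ∀ t ∈ Icc a b, 0 < deriv Ψ t) {x : ℝ} (hx : x ∈ Ioo a b)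
    {w : ℝ → ℝ} (hw : ContDiff ℝ ⊤ w) {α : ℝ} (h0 : 0 < α) (h1 : α < 1) (m : ℕ) :
    psiRLD a Ψ (fun t => w (Ψ t)) (α - m) x = RD (Ψ a) α w (Ψ x) m := by
  unfold psiRLD
  cases m with
  | zero =>
    rw [if_neg (by simpa using h0), RD, clD, Nat.cast_zero, sub_zero,
      psiI_deriv hmono hcont hpos hx hw (by linarith : 0 < 1 - α)]
    congr 4
    ring
  | succ m =>
    have hm : (0:ℝ) ≤ m := Nat.cast_nonneg m
    rw [if_pos (by push_cast; linarith), RD, psiI_eq hmono hcont hpos hx.1.le hx.2.le]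
    congr 1
    push_cast
    ring

/-- Replacing the function under a Ψ-integral of positive order on the open interval. -/
lemma psiI_congr {a x η : ℝ} (hax : a ≤ x) (hη : 0 < η) {Ψ u v : ℝ → ℝ}
    (huv : ∀ t ∈ Ioo a x, u t = v t) : psiI a Ψ u η x = psiI a Ψ v η x := by
  unfold psiI
  rw [if_neg hη.ne', if_neg hη.ne', intervalIntegral.integral_of_le hax,
    intervalIntegral.integral_of_le hax, integral_Ioc_eq_integral_Ioo,
    integral_Ioc_eq_integral_Ioo]
  congr 1
  apply setIntegral_congr_fun measurableSet_Ioo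
  intro t ht
  simp only [huv t ht]

lemma psiHD_pos {a b : ℝ} {Ψ : ℝ → ℝ}
    (hmono : StrictMonoOn Ψ (Icc a b)) (hcont : ContinuousOn Ψ (Icc a b))
    (hpos : ∀ t ∈ Icc a b, 0 < deriv Ψ t) {x : ℝ} (hx : x ∈ Ioo a b)
    {F : ℝ → ℝ} (hF : ContDiff ℝ ⊤ F) {α β : ℝ} (hη : 0 < β * (1 - α))
    (hξ : 0 < (1 - β) * (1 - α)) :
    psiHD a Ψ (fun t => F (Ψ t)) α β x = clD (Ψ a) α F (Ψ x) := by
  unfold psiHD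
  set ξ := (1 - β) * (1 - α) with hξd
  have hlt : Ψ a < Ψ x :=
    hmono (left_mem_Icc.2 (hx.1.trans hx.2).le) (Ioo_subset_Icc_self hx) hx.1
  refine (psiI_congr hx.1.le hη
      (fun t ht => psiI_deriv hmono hcont hpos ⟨ht.1, ht.2.trans hx.2⟩ hF hξ)).trans ?_
  refine (psiI_eq hmono hcont hpos hx.1.le hx.2.le
    (fun s => F (Ψ a) * (s - Ψ a) ^ (ξ - 1) / Gamma ξ + rlI (Ψ a) ξ (deriv F) s) _).trans ?_
  rw [rlI_power_add hη hξ hlt (hF.continuous_deriv (by simp)), clD]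
  have e : β * (1 - α) + ξ = 1 - α := by rw [hξd]; ring
  rw [e]
  congr 4
  ring

lemma psiHD_zero {a b : ℝ} {Ψ : ℝ → ℝ}
    (hmono : StrictMonoOn Ψ (Icc a b)) (hcont : ContinuousOn Ψ (Icc a b))
    (hpos : ∀ t ∈ Icc a b, 0 < deriv Ψ t) {x : ℝ} (hx : x ∈ Ioo a b)
    {F : ℝ → ℝ} (hF : ContDiff ℝ ⊤ F) {α β : ℝ} (hη : 0 < β * (1 - α))
    (hξ : (1 - β) * (1 - α) = 0) :
    psiHD a Ψ (fun t => F (Ψ t)) α β x = rlI (Ψ a) (1 - α) (deriv F) (Ψ x) := by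
  unfold psiHD
  rw [hξ, psiI_congr (v := fun t => deriv F (Ψ t)) hx.1.le hη
      (fun t ht => psiI_deriv_zero hpos ⟨ht.1, ht.2.trans hx.2⟩ hF),
    psiI_eq hmono hcont hpos hx.1.le hx.2.le]
  congr 1
  linarith

lemma psiI_base {a γ : ℝ} (hγ : γ ≠ 0) (Ψ g : ℝ → ℝ) : psiI a Ψ g γ a = 0 := by
  simp [psiI, hγ]

end LTR

/-- Leibniz Type Rule I for the Ψ-Hilfer fractional derivative, in terms
of Ψ-Riemann–Liouville fractional derivatives.  The inner sum `Σ_{m=l}^∞` is written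
as a sum over `n` with `m = n + l`. -/
theorem leibniz_type_rule_I
    (a b : ℝ) (hab : a < b) (α β : ℝ)
    (hα0 : 0 < α) (hα1 : α < 1) (hβ0 : 0 < β) (hβ1 : β ≤ 1)
    (Ψ : ℝ → ℝ)
    (hΨmono : StrictMonoOn Ψ (Set.Icc a b))
    (hΨC1 : ContDiffOn ℝ 1 Ψ (Set.Icc a b))
    (hΨpos : ∀ t ∈ Set.Icc a b, 0 < deriv Ψ t)
    (f g h w : ℝ → ℝ)
    (hf : f = fun t => h (Ψ t)) (hg : g = fun t => w (Ψ t))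
    (hh : EntireReal h) (hw : EntireReal w)
    (x : ℝ) (hx : x ∈ Set.Ioo a b) :
    (∀ l : ℕ, Summable (fun n : ℕ =>
        genBinom (-((1 - β) * (1 - α))) n * genBinom (α + (1 - β) * (1 - α)) l *
          iteratedDeriv (n + l) h (Ψ x) * psiRLD a Ψ g (α - (n + l)) x)) ∧
    Summable (fun l : ℕ => ∑' n : ℕ,
        genBinom (-((1 - β) * (1 - α))) n * genBinom (α + (1 - β) * (1 - α)) l *
          iteratedDeriv (n + l) h (Ψ x) * psiRLD a Ψ g (α - (n + l)) x) ∧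
    Summable (fun k : ℕ =>
        genBinom (-((1 - β) * (1 - α))) k * psiI a Ψ g ((1 - β) * (1 - α) + k) a *
          iteratedDeriv k h (Ψ a) *
          (Ψ x - Ψ a) ^ (-(α + (1 - β) * (1 - α))) / Real.Gamma (β * (1 - α))) ∧
    psiHD a Ψ (fun t => f t * g t) α β x =
      (∑' l : ℕ, ∑' n : ℕ,
        genBinom (-((1 - β) * (1 - α))) n * genBinom (α + (1 - β) * (1 - α)) l *
          iteratedDeriv (n + l) h (Ψ x) * psiRLD a Ψ g (α - (n + l)) x) -
      ∑' k : ℕ,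
        genBinom (-((1 - β) * (1 - α))) k * psiI a Ψ g ((1 - β) * (1 - α) + k) a *
          iteratedDeriv k h (Ψ a) *
          (Ψ x - Ψ a) ^ (-(α + (1 - β) * (1 - α))) / Real.Gamma (β * (1 - α)) := by
  have hcont : ContinuousOn Ψ (Set.Icc a b) := hΨC1.continuousOn
  have hlt : Ψ a < Ψ x :=
    hΨmono (Set.left_mem_Icc.2 hab.le) (Set.Ioo_subset_Icc_self hx) hx.1
  have hhC := LTR.entire_contDiff hh
  have hwC := LTR.entire_contDiff hw
  have hα : 0 < 1 - α := by linarith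
  have hη : 0 < β * (1 - α) := by positivity
  have hξ0 : 0 ≤ (1 - β) * (1 - α) := mul_nonneg (by linarith) hα.le
  have hsum : β * (1 - α) + (1 - β) * (1 - α) = 1 - α := by ring
  subst hf hg
  have hFC : ContDiff ℝ ⊤ (fun s => h s * w s) := hhC.mul hwC
  have key : ∀ n l : ℕ,
      genBinom (-((1 - β) * (1 - α))) n * genBinom (α + (1 - β) * (1 - α)) l *
          iteratedDeriv (n + l) h (Ψ x) * psiRLD a Ψ (fun t => w (Ψ t)) (α - (n + l)) x
      = genBinom (-((1 - β) * (1 - α))) n * genBinom (α + (1 - β) * (1 - α)) l *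
        (fun m => iteratedDeriv m h (Ψ x) * LTR.RD (Ψ a) α w (Ψ x) m) (n + l) := by
    intro n l
    have e := LTR.psiRLD_eq hΨmono hcont hΨpos hx hwC hα0 hα1 (n + l)
    push_cast at e
    rw [e, mul_assoc]
  obtain ⟨d1, d2, d3⟩ := LTR.double_sum
    (p := -((1 - β) * (1 - α))) (q := α + (1 - β) * (1 - α))
    (T := fun m => iteratedDeriv m h (Ψ x) * LTR.RD (Ψ a) α w (Ψ x) m)
    (S := LTR.clD (Ψ a) α (fun s => h s * w s) (Ψ x))
    (by rw [abs_neg, abs_of_nonneg hξ0]; linarith)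
    (by rw [abs_of_nonneg (by linarith)]; linarith)
    (LTR.leib_summable hα0 hα1 hlt hh hw)
    (by
      rw [show -((1 - β) * (1 - α)) + (α + (1 - β) * (1 - α)) = α by ring]
      exact LTR.leib2 hα1 hlt hh hw)
  simp only [key]
  refine ⟨d1, d2, ?_⟩
  rw [d3]
  rcases eq_or_lt_of_le hξ0 with hz | hp
  · have hk : ∀ k : ℕ, k ≠ 0 → genBinom (-((1 - β) * (1 - α))) k *
        psiI a Ψ (fun t => w (Ψ t)) ((1 - β) * (1 - α) + k) a *
          iteratedDeriv k h (Ψ a) *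
          (Ψ x - Ψ a) ^ (-(α + (1 - β) * (1 - α))) / Real.Gamma (β * (1 - α)) = 0 := by
      intro k hk
      rw [LTR.psiI_base (by rw [← hz, zero_add]; exact_mod_cast hk)]
      simp
    have hs := hasSum_single 0 hk
    refine ⟨hs.summable, ?_⟩
    rw [hs.tsum_eq]
    have e := LTR.psiHD_zero hΨmono hcont hΨpos hx hFC hη hz.symm
    have e2 : β * (1 - α) = 1 - α := by linarith
    refine e.trans ?_
    rw [e2, ← hz]
    simp [psiI, LTR.genBinom_zero, LTR.clD]
    ring
  · have hk : ∀ k : ℕ, genBinom (-((1 - β) * (1 - α))) k *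
        psiI a Ψ (fun t => w (Ψ t)) ((1 - β) * (1 - α) + k) a *
          iteratedDeriv k h (Ψ a) *
          (Ψ x - Ψ a) ^ (-(α + (1 - β) * (1 - α))) / Real.Gamma (β * (1 - α)) = 0 := by
      intro k
      rw [LTR.psiI_base (by positivity)]
      simp
    simp only [hk, tsum_zero, sub_zero]
    exact ⟨summable_zero, LTR.psiHD_pos hΨmono hcont hΨpos hx hFC hη hp⟩
end

section
/- (Leibniz Type Rule II.) Let 0 < α < 1, 0 < β ≤ 1, and set ξ := (1−β)(1−α). Let a < b, Ψ : ℝ → ℝ strictly increasing and continuously differentiable on [a,b] with Ψ'(t) > 0 for all t ∈ [a,b]. Suppose f = h ∘ Ψ and g = w ∘ Ψ with h, w : ℝ → ℝ real-analytic with everywhere-convergent power series, and write f⁽ᵐ⁾(x) := h⁽ᵐ⁾(Ψ(x)). Then for every x ∈ (a,b): (^{H}D^{α,β;Ψ}(f·g))(x) = Σ_{m=0}^∞ binom(α, m) f⁽ᵐ⁾(x) (^{H}D^{α−m,β;Ψ} g)(x) + Σ_{k=0}^∞ binom(−ξ, k) (I^{ξ+k;Ψ}g)(a) (f⁽ᵏ⁾(x)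 − f⁽ᵏ⁾(a)) (Ψ(x) − Ψ(a))^{−(α+ξ)} / Γ(β(1−α)), where (I^{γ;Ψ}g)(a) := 0 for γ > 0 and := g(a) for γ = 0, all series converging. -/
open Real

section LeibnizHelpers
open MeasureTheory Set

theorem hs_congr {f g : ℕ → ℝ} {a : ℝ} (h : HasSum f a) (e : ∀ n, g n = f n) : HasSum g a := by
  rwa [funext e]

/-- `F` is the sum of the everywhere convergent power series with coefficients `c`. -/
def Ser (F : ℝ → ℝ) (c : ℕ → ℝ) : Prop := ∀ z : ℝ, HasSum (fun n => c n * z ^ n) (F z)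

theorem Ser.fps {F : ℝ → ℝ} {c : ℕ → ℝ} (h : Ser F c) :
    HasFPowerSeriesOnBall F (FormalMultilinearSeries.ofScalars ℝ c) 0 ⊤ where
  r_le := by
    rw [(FormalMultilinearSeries.radius_eq_top_iff_summable_norm _).2]
    intro r
    simp only [FormalMultilinearSeries.ofScalars_norm]
    have := (h (r : ℝ)).summable.norm
    simpa [norm_mul] using this
  r_pos := by simp
  hasSum := by
    intro y _
    simp only [FormalMultilinearSeries.ofScalars_apply_eq, zero_add, smul_eq_mul]
    exact h y

theorem recenter_of_fps {F : ℝ → ℝ} {p : FormalMultilinearSeries ℝ ℝ ℝ}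
    (h : HasFPowerSeriesOnBall F p 0 ⊤) (y : ℝ) :
    Ser (fun v => F (y + v)) (fun n => iteratedDeriv n F y / n.factorial) := by
  have h1 := h.changeOrigin (y := y) (by simp)
  rw [zero_add] at h1
  have h2 : (⊤ : ENNReal) - ‖y‖₊ = ⊤ := by simp
  rw [h2] at h1
  have h3 := h1.analyticAt.hasFPowerSeriesAt
  have h4 := h1.hasFPowerSeriesAt.eq_formalMultilinearSeries h3
  rw [h4] at h1
  intro z
  have := h1.hasSum (y := z) (by simp)
  simpa only [FormalMultilinearSeries.ofScalars_apply_eq, smul_eq_mul] using this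

theorem Ser.recenter {F : ℝ → ℝ} {c : ℕ → ℝ} (h : Ser F c) (y : ℝ) :
    Ser (fun v => F (y + v)) (fun n => iteratedDeriv n F y / n.factorial) :=
  recenter_of_fps h.fps y

theorem EntireReal.recenter {F : ℝ → ℝ} (h : EntireReal F) (y : ℝ) :
    Ser (fun v => F (y + v)) (fun n => iteratedDeriv n F y / n.factorial) := by
  obtain ⟨p, hp⟩ := h
  exact recenter_of_fps hp y

theorem Ser.mul {F G : ℝ → ℝ} {c d : ℕ → ℝ} (h : Ser F c) (k : Ser G d) :
    Ser (fun z => F z * G z)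
      (fun n => ∑ ij ∈ Finset.HasAntidiagonal.antidiagonal n, c ij.1 * d ij.2) := by
  intro z
  have h1 := (h z).summable.norm
  have h2 := (k z).summable.norm
  have e := tsum_mul_tsum_eq_tsum_sum_antidiagonal_of_summable_norm h1 h2
  have s := (summable_norm_sum_mul_antidiagonal_of_summable_norm h1 h2).of_norm
  rw [(h z).tsum_eq, (k z).tsum_eq] at e
  have := s.hasSum
  rw [← e] at this
  refine hs_congr this fun n => ?_
  rw [Finset.sum_mul]
  refine Finset.sum_congr rfl fun ij hij => ?_
  rw [← Finset.HasAntidiagonal.mem_antidiagonal.1 hij, pow_add]; ring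

theorem Ser.add {F G : ℝ → ℝ} {c d : ℕ → ℝ} (h : Ser F c) (k : Ser G d) :
    Ser (fun z => F z + G z) (fun n => c n + d n) := by
  intro z
  refine hs_congr ((h z).add (k z)) fun n => ?_
  ring

theorem Ser.const_mul {F : ℝ → ℝ} {c : ℕ → ℝ} (h : Ser F c) (r : ℝ) :
    Ser (fun z => r * F z) (fun n => r * c n) := by
  intro z
  refine hs_congr ((h z).mul_left r) fun n => ?_
  ring

/-- coefficients shifted by `m` -/
def shiftc (m : ℕ) (c : ℕ → ℝ) (n : ℕ) : ℝ := if n < m then 0 else c (n - m)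

theorem shiftc_add (m : ℕ) (c : ℕ → ℝ) (n : ℕ) : shiftc m c (n + m) = c n := by
  simp [shiftc]

theorem hasSum_shiftc (m : ℕ) (c t : ℕ → ℝ) (s : ℝ) :
    HasSum (fun n => shiftc m c n * t n) s ↔ HasSum (fun n => c n * t (n + m)) s := by
  rw [← Function.Injective.hasSum_iff (add_left_injective m)]
  · simp only [Function.comp_def, shiftc_add]
  · intro n hn
    have : n < m := by
      by_contra hc
      exact hn ⟨n - m, by simp; omega⟩
    simp [shiftc, this]

theorem Ser.shift {F : ℝ → ℝ} {c : ℕ → ℝ} (h : Ser F c) (m : ℕ) :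
    Ser (fun z => z ^ m * F z) (shiftc m c) := by
  intro z
  rw [hasSum_shiftc]
  refine hs_congr ((h z).mul_left (z ^ m)) fun n => ?_
  rw [pow_add]; ring

theorem Ser.deriv {F : ℝ → ℝ} {c : ℕ → ℝ} (h : Ser F c) :
    Ser (deriv F) (fun n => (n + 1) * c (n + 1)) := by
  intro z
  have h1 := h.fps.fderiv.hasSum (y := z) (by simp)
  rw [zero_add] at h1
  have h2 := h1.mapL (ContinuousLinearMap.apply ℝ ℝ (1 : ℝ))
  simp only [ContinuousLinearMap.apply_apply, fderiv_apply_one_eq_deriv] at h2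
  refine hs_congr h2 fun n => ?_
  rw [FormalMultilinearSeries.apply_eq_pow_smul_coeff]
  simp [FormalMultilinearSeries.derivSeries_coeff_one, FormalMultilinearSeries.coeff_ofScalars]
  ring

theorem Ser.differentiable {F : ℝ → ℝ} {c : ℕ → ℝ} (h : Ser F c) : Differentiable ℝ F := by
  intro z
  have := h.fps.analyticAt_of_mem (y := z) (by simp)
  exact this.differentiableAt

theorem Ser.zero {F : ℝ → ℝ} {c : ℕ → ℝ} (h : Ser F c) : F 0 = c 0 := by
  have h1 := h 0
  have h2 := hasSum_single (f := fun n => c n * (0 : ℝ) ^ n) 0 (by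
    intro n hn; simp [hn])
  simpa using h1.unique h2

/-- Riemann-Liouville integral based at `0`. -/
noncomputable def J (ν : ℝ) (F : ℝ → ℝ) (X : ℝ) : ℝ :=
  if ν = 0 then F X else (Real.Gamma ν)⁻¹ * ∫ u in (0 : ℝ)..X, (X - u) ^ (ν - 1) * F u

theorem beta_real {ν s z : ℝ} (hν : 0 < ν) (hs : 0 < s) (hz : 0 < z) :
    ∫ u in (0 : ℝ)..z, (z - u) ^ (ν - 1) * u ^ (s - 1) =
      Real.Gamma ν * Real.Gamma s / Real.Gamma (s + ν) * z ^ (s + ν - 1) := by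
  have h := Complex.betaIntegral_scaled (s : ℂ) (ν : ℂ) hz
  have h2 := ProbabilityTheory.beta_eq_betaIntegralReal s ν hs hν
  have e : ∫ u in (0 : ℝ)..z, (u : ℂ) ^ ((s : ℂ) - 1) * ((z : ℂ) - u) ^ ((ν : ℂ) - 1) =
      ((∫ u in (0 : ℝ)..z, (z - u) ^ (ν - 1) * u ^ (s - 1) : ℝ) : ℂ) := by
    rw [← intervalIntegral.integral_ofReal]
    apply intervalIntegral.integral_congr
    intro u hu
    rw [uIcc_of_le hz.le] at hu
    simp only
    rw [Complex.ofReal_mul, Complex.ofReal_cpow (by linarith [hu.2]), Complex.ofReal_cpow hu.1]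
    push_cast; ring
  rw [e] at h
  have h3 : ((z : ℂ)) ^ ((s : ℂ) + ν - 1) = ((z ^ (s + ν - 1) : ℝ) : ℂ) := by
    rw [Complex.ofReal_cpow hz.le]; push_cast; rfl
  rw [h3] at h
  have h4 := congrArg Complex.re h
  rw [Complex.ofReal_re, Complex.re_ofReal_mul, ← h2, ProbabilityTheory.beta] at h4
  rw [h4]; ring

theorem beta_int {ν s z : ℝ} (hν : 0 < ν) (hs : 0 < s) (hz : 0 < z) :
    IntegrableOn (fun u => (z - u) ^ (ν - 1) * u ^ (s - 1)) (Ioc 0 z) := by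
  by_contra hc
  have h := beta_real hν hs hz
  rw [intervalIntegral.integral_of_le hz.le, integral_undef hc] at h
  have h1 := Real.Gamma_pos_of_pos hν
  have h2 := Real.Gamma_pos_of_pos hs
  have h3 := Real.Gamma_pos_of_pos (add_pos hs hν)
  have : 0 < Real.Gamma ν * Real.Gamma s / Real.Gamma (s + ν) * z ^ (s + ν - 1) := by positivity
  linarith

/-- Termwise fractional integration. -/
theorem J_hasSum {F : ℝ → ℝ} {c : ℕ → ℝ} (h : Ser F c) {ν σ z : ℝ} (hν : 0 < ν) (hσ : -1 < σ)
    (hz : 0 < z) :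
    HasSum (fun n : ℕ => c n * (Real.Gamma (n + σ + 1) / Real.Gamma (n + σ + 1 + ν)) *
      z ^ ((n : ℝ) + σ + ν)) (J ν (fun u => u ^ σ * F u) z) := by
  have key := hasSum_integral_of_summable_integral_norm (μ := volume.restrict (Ioc 0 z))
    (F := fun (n : ℕ) u => c n * ((z - u) ^ (ν - 1) * u ^ (((n : ℝ) + σ + 1) - 1))) ?_ ?_
  · have hsum : ∫ u in Ioc 0 z, (∑' n : ℕ, c n * ((z - u) ^ (ν - 1) * u ^ (((n : ℝ) + σ + 1) - 1)))
        = ∫ u in Ioc 0 z, (z - u) ^ (ν - 1) * (u ^ σ * F u) := by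
      apply setIntegral_congr_fun measurableSet_Ioc
      intro u hu
      simp only
      rw [← (h u).tsum_eq, ← tsum_mul_left, ← tsum_mul_left]
      refine tsum_congr fun n => ?_
      rw [show (n : ℝ) + σ + 1 - 1 = n + σ by ring, Real.rpow_add hu.1, Real.rpow_natCast]; ring
    rw [hsum] at key
    have := key.mul_left (Real.Gamma ν)⁻¹
    rw [J, if_neg hν.ne', intervalIntegral.integral_of_le hz.le]
    refine hs_congr this fun n => ?_
    rw [integral_const_mul, ← intervalIntegral.integral_of_le hz.le,
      beta_real hν (by have : (0:ℝ) ≤ n := n.cast_nonneg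
                       linarith) hz]
    have h1 := Real.Gamma_pos_of_pos hν
    rw [show (n : ℝ) + σ + 1 + ν - 1 = n + σ + ν by ring]
    field_simp
  · intro n
    exact (beta_int hν (by have : (0:ℝ) ≤ n := n.cast_nonneg
                           linarith) hz).const_mul _
  · refine Summable.of_nonneg_of_le (fun n => integral_nonneg fun u => norm_nonneg _) ?_
      ((h z).summable.norm.mul_right (∫ u in Ioc 0 z, (z - u) ^ (ν - 1) * u ^ ((σ + 1) - 1)))
    intro n
    rw [← integral_const_mul]
    apply setIntegral_mono_on _ _ measurableSet_Ioc
    · intro u hu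
      have h0 : 0 ≤ z - u := by linarith [hu.2]
      have h1 : 0 ≤ (z - u) ^ (ν - 1) := Real.rpow_nonneg h0 _
      have h2 : 0 ≤ u ^ σ := Real.rpow_nonneg hu.1.le _
      rw [show (n : ℝ) + σ + 1 - 1 = n + σ by ring, Real.rpow_add hu.1, Real.rpow_natCast,
        show σ + 1 - 1 = σ by ring, norm_mul (c n), norm_mul (c n),
        Real.norm_of_nonneg (by have := hu.1; positivity : 0 ≤ (z - u) ^ (ν - 1) * (u ^ n * u ^ σ)), norm_pow, Real.norm_of_nonneg hz.le]
      have h3 : u ^ n ≤ z ^ n := pow_le_pow_left₀ hu.1.le hu.2 n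
      calc ‖c n‖ * ((z - u) ^ (ν - 1) * (u ^ n * u ^ σ))
          = (‖c n‖ * ((z - u) ^ (ν - 1) * u ^ σ)) * u ^ n := by ring
        _ ≤ (‖c n‖ * ((z - u) ^ (ν - 1) * u ^ σ)) * z ^ n := by gcongr
        _ = _ := by ring
    · exact ((beta_int hν (by have : (0:ℝ) ≤ n := n.cast_nonneg
                              linarith) hz).const_mul _).norm
    · exact (beta_int hν (by linarith) hz).const_mul _

theorem J_fact {F : ℝ → ℝ} {c : ℕ → ℝ} (h : Ser F c) {ν σ : ℝ} (hν : 0 < ν) (hσ : -1 < σ) :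
    ∃ K : ℝ → ℝ,
      Ser K (fun n : ℕ => c n * (Real.Gamma (n + σ + 1) / Real.Gamma (n + σ + 1 + ν))) ∧
      ∀ z, 0 < z → J ν (fun u => u ^ σ * F u) z = z ^ (σ + ν) * K z := by
  have base : ∀ r : ℝ, 0 < r → Summable (fun n : ℕ =>
      c n * (Real.Gamma (n + σ + 1) / Real.Gamma (n + σ + 1 + ν)) * r ^ n) := by
    intro r hr
    have h1 := (J_hasSum h hν hσ hr).summable.mul_right (r ^ (-(σ + ν)))
    refine h1.congr fun n => ?_
    rw [mul_assoc, ← Real.rpow_add hr, ← Real.rpow_natCast r n]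
    congr 2; ring
  have hS : Ser (fun z => ∑' n : ℕ,
      c n * (Real.Gamma (n + σ + 1) / Real.Gamma (n + σ + 1 + ν)) * z ^ n)
      (fun n : ℕ => c n * (Real.Gamma (n + σ + 1) / Real.Gamma (n + σ + 1 + ν))) := by
    intro z
    apply Summable.hasSum
    refine Summable.of_norm_bounded (base (|z| + 1) (by positivity)).norm fun n => ?_
    rw [norm_mul, norm_mul _ ((|z| + 1) ^ n), norm_pow, norm_pow, Real.norm_eq_abs z,
      Real.norm_of_nonneg (by positivity : 0 ≤ |z| + 1)]
    gcongr
    linarith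
  refine ⟨_, hS, fun z hz => ?_⟩
  refine (J_hasSum h hν hσ hz).unique ?_
  refine hs_congr ((hS z).mul_left (z ^ (σ + ν))) fun n => ?_
  rw [show (n : ℝ) + σ + ν = n + (σ + ν) by ring, Real.rpow_add hz, Real.rpow_natCast]
  ring

theorem J_zero_exp (ν : ℝ) (F : ℝ → ℝ) (X : ℝ) : J ν (fun u => u ^ (0 : ℝ) * F u) X = J ν F X := by
  simp

theorem hilU {F : ℝ → ℝ} {a : ℕ → ℝ} (h : Ser F a) {α ξ ν : ℝ} (hα : α < 1) (hξ : 0 ≤ ξ)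
    (hν : 0 < ν) (hs : ξ + ν = 1 - α) :
    ∃ D : ℝ → ℝ, (∀ z, 0 < z → HasDerivAt (J ξ F) (D z) z) ∧
      ∀ X, 0 < X → HasSum (fun n : ℕ => a n *
        (Real.Gamma (n + 1) / Real.Gamma (n + 1 - α) * X ^ ((n : ℝ) - α)))
        (J ν D X + a 0 * (if ξ = 0 then X ^ (-α) / Real.Gamma (1 - α) else 0)) := by
  rcases hξ.eq_or_lt with h0 | h0
  · subst h0
    have hν' : ν = 1 - α := by linarith
    subst hν'
    refine ⟨_root_.deriv F, fun z _ => ?_, fun X hX => ?_⟩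
    · have : J 0 F = F := by funext z; simp [J]
      rw [this]
      exact (h.differentiable z).hasDerivAt
    · have h1 := J_hasSum h.deriv hν (σ := 0) (by norm_num) hX
      rw [J_zero_exp] at h1
      have h2 := (hasSum_nat_add_iff (f := fun n : ℕ => a n *
        (Real.Gamma (n + 1) / Real.Gamma (n + 1 - α) * X ^ ((n : ℝ) - α))) 1).1
        (hs_congr h1 fun n => ?_)
      · simpa [div_eq_mul_inv, mul_comm, mul_left_comm] using h2
      · push_cast
        rw [show (n : ℝ) + 0 + 1 + (1 - α) = n + 1 + 1 - α by ring,
          show (n : ℝ) + 0 + (1 - α) = n + 1 - α by ring, add_zero,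
          Real.Gamma_add_one (s := (n : ℝ) + 1) (by positivity)]
        ring
  · obtain ⟨K, hK, hJ⟩ := J_fact h h0 (σ := 0) (by norm_num)
    simp only [J_zero_exp, zero_add] at hJ
    have hM := (hK.const_mul ξ).add (hK.deriv.shift 1)
    refine ⟨fun z => z ^ (ξ - 1) * (ξ * K z + z ^ 1 * _root_.deriv K z), fun z hz => ?_,
      fun X hX => ?_⟩
    · have h1 := (Real.hasDerivAt_rpow_const (x := z) (p := ξ) (Or.inl hz.ne')).mul
        (hK.differentiable z).hasDerivAt
      have h2 : J ξ F =ᶠ[nhds z] fun z => z ^ ξ * K z := by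
        filter_upwards [lt_mem_nhds hz] with y hy using hJ y hy
      refine HasDerivAt.congr_of_eventuallyEq ?_ h2
      refine HasDerivAt.congr_deriv h1 ?_
      have : z ^ ξ = z ^ (ξ - 1) * z := by
        rw [← Real.rpow_add_one hz.ne']; ring_nf
      rw [this]; ring
    · rw [if_neg h0.ne', mul_zero, add_zero]
      refine hs_congr (J_hasSum hM hν (σ := ξ - 1) (by linarith) hX) fun n => ?_
      have hn : (0 : ℝ) ≤ n := n.cast_nonneg
      have e1 : shiftc 1 (fun n : ℕ => ((n : ℝ) + 1) * (a (n + 1) *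
          (Real.Gamma (((n + 1 : ℕ) : ℝ) + 0 + 1) / Real.Gamma (((n + 1 : ℕ) : ℝ) + 0 + 1 + ξ)))) n
          = n * (a n * (Real.Gamma (n + 0 + 1) / Real.Gamma (n + 0 + 1 + ξ))) := by
        cases n with
        | zero => simp [shiftc]
        | succ n => simp [shiftc]
      rw [e1, show (n : ℝ) + (ξ - 1) + 1 + ν = n + 1 - α by linarith,
        show (n : ℝ) + (ξ - 1) + ν = n - α by linarith,
        show (n : ℝ) + (ξ - 1) + 1 = n + ξ by ring, add_zero,
        show (n : ℝ) + 1 + ξ = n + ξ + 1 by ring,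
        Real.Gamma_add_one (s := (n : ℝ) + ξ) (by positivity)]
      have g1 := Real.Gamma_pos_of_pos (show 0 < (n : ℝ) + ξ by positivity)
      have g2 : 0 < (n : ℝ) + ξ := by positivity
      field_simp
      ring

theorem Ser.tail {F : ℝ → ℝ} {c : ℕ → ℝ} (h : Ser F c) :
    ∃ Q : ℝ → ℝ, Ser Q (fun n => c (n + 1)) ∧ ∀ v, F v = c 0 + v * Q v := by
  have hS : Ser (fun v => ∑' n, c (n + 1) * v ^ n) (fun n => c (n + 1)) := by
    intro v
    apply Summable.hasSum
    by_cases hv : v = 0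
    · subst hv
      exact (hasSum_single 0 (by intro n hn; simp [hn])).summable
    · have := ((summable_nat_add_iff 1).2 (h v).summable).mul_right v⁻¹
      refine this.congr fun n => ?_
      rw [pow_succ]; field_simp
  refine ⟨_, hS, fun v => ?_⟩
  have h1 := (hasSum_nat_add_iff (f := fun n => c n * v ^ n) 1).1
    (hs_congr ((hS v).mul_left v) fun n => by rw [pow_succ]; ring)
  have := (h v).unique h1
  simp at this
  linarith

theorem binom_gamma {α : ℝ} (hα : α < 1) (m : ℕ) :
    genBinom α (m + 1) * ((m + 1).factorial : ℝ) =
      α * ((-1) ^ m * (Real.Gamma (m + 1 - α) / Real.Gamma (1 - α))) := by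
  have hf : ((m + 1).factorial : ℝ) ≠ 0 := by positivity
  rw [genBinom, div_mul_cancel₀ _ hf]
  clear hf
  have hg := Real.Gamma_pos_of_pos (show 0 < 1 - α by linarith)
  induction m with
  | zero => simp [hg.ne']
  | succ m ih =>
    have hm : (0 : ℝ) ≤ m := m.cast_nonneg
    rw [Finset.prod_range_succ, ih]
    push_cast
    rw [show (m : ℝ) + 1 + 1 - α = (m + 1 - α) + 1 by ring,
      Real.Gamma_add_one (s := (m : ℝ) + 1 - α) (by linarith)]
    ring

theorem J_mul_hasSum {W Q : ℝ → ℝ} {η : ℕ → ℝ} (hW : Continuous W) (hQ : Ser Q η)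
    {α X : ℝ} (hα : α < 1) (hX : 0 < X) :
    HasSum (fun m : ℕ => η m * ((-1) ^ m * (Real.Gamma (m + 1 - α) / Real.Gamma (1 - α))) *
      J (m + 1 - α) W X) (J (1 - α) (fun u => Q (u - X) * W u) X) := by
  have hpos : 0 < 1 - α := by linarith
  have hg := Real.Gamma_pos_of_pos hpos
  have hint : IntegrableOn (fun u => (X - u) ^ (1 - α - 1) * W u) (Ioo 0 X) := by
    have h1 := beta_int hpos one_pos hX
    simp only [sub_self, Real.rpow_zero, mul_one] at h1
    obtain ⟨C, hC⟩ := isCompact_Icc.exists_bound_of_continuousOn (s := Icc 0 X) hW.continuousOn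
    refine (Integrable.mono_measure h1 (Measure.restrict_mono Ioo_subset_Ioc_self le_rfl)).mul_bdd (c := C)
      hW.aestronglyMeasurable ?_
    refine (ae_restrict_iff' measurableSet_Ioo).2 (Filter.Eventually.of_forall fun u hu => ?_)
    exact hC u ⟨hu.1.le, hu.2.le⟩
  have key := hasSum_integral_of_summable_integral_norm (μ := volume.restrict (Ioo 0 X))
    (F := fun (m : ℕ) u => (η m * (u - X) ^ m) * ((X - u) ^ (1 - α - 1) * W u)) ?_ ?_
  · have e : ∫ u in Ioo 0 X, (∑' m : ℕ, (η m * (u - X) ^ m) * ((X - u) ^ (1 - α - 1) * W u)) =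
        ∫ u in Ioo 0 X, (X - u) ^ (1 - α - 1) * (Q (u - X) * W u) := by
      apply setIntegral_congr_fun measurableSet_Ioo
      intro u hu
      simp only
      rw [tsum_mul_right, (hQ (u - X)).tsum_eq]; ring
    rw [e] at key
    rw [J, if_neg hpos.ne', intervalIntegral.integral_of_le hX.le, integral_Ioc_eq_integral_Ioo]
    refine hs_congr (key.mul_left _) fun m => ?_
    have hm : (0 : ℝ) ≤ m := m.cast_nonneg
    have hgm := Real.Gamma_pos_of_pos (show 0 < (m : ℝ) + 1 - α by linarith)
    rw [J, if_neg (by linarith), intervalIntegral.integral_of_le hX.le,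
      integral_Ioc_eq_integral_Ioo]
    have e2 : ∫ u in Ioo 0 X, (η m * (u - X) ^ m) * ((X - u) ^ (1 - α - 1) * W u) =
        ∫ u in Ioo 0 X, (η m * (-1) ^ m) * ((X - u) ^ ((m : ℝ) + 1 - α - 1) * W u) := by
      apply setIntegral_congr_fun measurableSet_Ioo
      intro u hu
      simp only
      rw [show (m : ℝ) + 1 - α - 1 = m + (1 - α - 1) by ring,
        Real.rpow_add (by linarith [hu.2]), Real.rpow_natCast,
        show u - X = (-1) * (X - u) by ring, mul_pow]
      ring
    rw [e2, integral_const_mul]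
    field_simp
  · intro m
    have hc : Continuous fun u => η m * (u - X) ^ m := by fun_prop
    refine Integrable.bdd_mul (c := |η m| * X ^ m) hint hc.aestronglyMeasurable ?_
    refine (ae_restrict_iff' measurableSet_Ioo).2 (Filter.Eventually.of_forall fun u hu => ?_)
    rw [norm_mul, norm_pow, Real.norm_eq_abs, Real.norm_eq_abs]
    gcongr
    rw [abs_le]; constructor <;> linarith [hu.1, hu.2]
  · refine Summable.of_nonneg_of_le (fun n => integral_nonneg fun u => norm_nonneg _) ?_
      ((hQ X).summable.norm.mul_right (∫ u in Ioo 0 X, ‖(X - u) ^ (1 - α - 1) * W u‖))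
    intro m
    rw [← integral_const_mul]
    have hb : ∀ u ∈ Ioo 0 X, ‖η m * (u - X) ^ m‖ ≤ ‖η m * X ^ m‖ := by
      intro u hu
      rw [norm_mul, norm_pow, norm_mul, norm_pow]
      gcongr
      rw [Real.norm_eq_abs, Real.norm_of_nonneg hX.le, abs_le]
      constructor <;> linarith [hu.1, hu.2]
    apply setIntegral_mono_on _ _ measurableSet_Ioo
    · intro u hu
      rw [norm_mul (η m * _)]
      gcongr
      exact hb u hu
    · have hc : Continuous fun u => η m * (u - X) ^ m := by fun_prop
      refine (Integrable.bdd_mul (c := ‖η m * X ^ m‖) hint hc.aestronglyMeasurable ?_).norm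
      exact (ae_restrict_iff' measurableSet_Ioo).2 (Filter.Eventually.of_forall hb)
    · exact hint.norm.const_mul _

theorem psiI_eq {a b : ℝ} {Ψ f F : ℝ → ℝ}
    (hmono : StrictMonoOn Ψ (Icc a b)) (hpos : ∀ t ∈ Icc a b, 0 < deriv Ψ t)
    (hf : ∀ t ∈ Ioo a b, f t = F (Ψ t - Ψ a)) (ν : ℝ) {x : ℝ} (hx : x ∈ Ioo a b) :
    psiI a Ψ f ν x = J ν F (Ψ x - Ψ a) := by
  have hd : ∀ t ∈ Icc a b, HasDerivAt Ψ (deriv Ψ t) t := fun t ht =>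
    (differentiableAt_of_deriv_ne_zero (hpos t ht).ne').hasDerivAt
  have hsub : Icc a x ⊆ Icc a b := Icc_subset_Icc_right hx.2.le
  have hax : Ψ a < Ψ x := hmono ⟨le_rfl, (hx.1.trans hx.2).le⟩ ⟨hx.1.le, hx.2.le⟩ hx.1
  unfold psiI J
  split_ifs with h0
  · exact hf x hx
  · congr 1
    rw [intervalIntegral.integral_of_le hx.1.le, intervalIntegral.integral_of_le (by linarith),
      integral_Ioc_eq_integral_Ioo, integral_Ioc_eq_integral_Ioo]
    have himg : (fun t => Ψ t - Ψ a) '' Ioo a x = Ioo 0 (Ψ x - Ψ a) := by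
      ext u
      constructor
      · rintro ⟨t, ht, rfl⟩
        have h1 := hmono ⟨le_rfl, (hx.1.trans hx.2).le⟩ (hsub ⟨ht.1.le, ht.2.le⟩) ht.1
        have h2 := hmono (hsub ⟨ht.1.le, ht.2.le⟩) ⟨hx.1.le, hx.2.le⟩ ht.2
        exact ⟨by simp only; linarith, by simp only; linarith⟩
      · intro hu
        have hc : ContinuousOn (fun t => Ψ t - Ψ a) (Icc a x) := fun t ht =>
          ((hd t (hsub ht)).continuousAt.sub continuousAt_const).continuousWithinAt
        have := intermediate_value_Ioo hx.1.le hc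
        simp only [sub_self] at this
        exact this hu
    rw [← himg, integral_image_eq_integral_abs_deriv_smul (f' := deriv Ψ) measurableSet_Ioo]
    · apply setIntegral_congr_fun measurableSet_Ioo
      intro t ht
      have ht' : t ∈ Icc a b := hsub ⟨ht.1.le, ht.2.le⟩
      simp only [smul_eq_mul]
      rw [abs_of_pos (hpos t ht'), hf t ⟨ht.1, ht.2.trans hx.2⟩,
        show Ψ x - Ψ a - (Ψ t - Ψ a) = Ψ x - Ψ t by ring]
      ring
    · intro t ht
      exact ((hd t (hsub ⟨ht.1.le, ht.2.le⟩)).sub_const _).hasDerivWithinAt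
    · intro s hs t ht hst
      refine hmono.injOn (hsub ⟨hs.1.le, hs.2.le⟩) (hsub ⟨ht.1.le, ht.2.le⟩) ?_
      simpa using hst

theorem psiHD_eq {a b : ℝ} {Ψ f F D : ℝ → ℝ}
    (hmono : StrictMonoOn Ψ (Icc a b)) (hpos : ∀ t ∈ Icc a b, 0 < deriv Ψ t)
    (hf : ∀ t ∈ Ioo a b, f t = F (Ψ t - Ψ a)) {α β : ℝ}
    (hD : ∀ z, 0 < z → HasDerivAt (J ((1 - β) * (1 - α)) F) (D z) z)
    {x : ℝ} (hx : x ∈ Ioo a b) :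
    psiHD a Ψ f α β x = J (β * (1 - α)) D (Ψ x - Ψ a) := by
  unfold psiHD
  refine psiI_eq hmono hpos ?_ _ hx
  intro y hy
  have hy' : y ∈ Icc a b := ⟨hy.1.le, hy.2.le⟩
  have hay : Ψ a < Ψ y := hmono ⟨le_rfl, (hx.1.trans hx.2).le⟩ hy' hy.1
  have h1 : (fun z => psiI a Ψ f ((1 - β) * (1 - α)) z) =ᶠ[nhds y]
      fun z => J ((1 - β) * (1 - α)) F (Ψ z - Ψ a) := by
    filter_upwards [Ioo_mem_nhds hy.1 hy.2] with z hz using psiI_eq hmono hpos hf _ hz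
  have hdy : HasDerivAt Ψ (deriv Ψ y) y :=
    (differentiableAt_of_deriv_ne_zero (hpos y hy').ne').hasDerivAt
  have h2 := HasDerivAt.comp y (hD (Ψ y - Ψ a) (by linarith)) (hdy.sub_const (Ψ a))
  rw [h1.deriv_eq]
  have h3 : deriv (fun z => J ((1 - β) * (1 - α)) F (Ψ z - Ψ a)) y = _ := h2.deriv
  rw [h3]
  have := hpos y hy'
  field_simp

theorem hil_eq {a b : ℝ} {Ψ f F : ℝ → ℝ} {c : ℕ → ℝ}
    (hmono : StrictMonoOn Ψ (Icc a b)) (hpos : ∀ t ∈ Icc a b, 0 < deriv Ψ t)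
    (hf : ∀ t ∈ Ioo a b, f t = F (Ψ t - Ψ a)) {α β : ℝ}
    (hα1 : α < 1) (hβ0 : 0 < β) (hβ1 : β ≤ 1) (hF : Ser F c)
    {x : ℝ} (hx : x ∈ Ioo a b) :
    HasSum (fun n : ℕ => c n *
        (Real.Gamma (n + 1) / Real.Gamma (n + 1 - α) * (Ψ x - Ψ a) ^ ((n : ℝ) - α)))
      (psiHD a Ψ f α β x + c 0 * (if (1 - β) * (1 - α) = 0 then
        (Ψ x - Ψ a) ^ (-α) / Real.Gamma (1 - α) else 0)) := by
  have hX : Ψ a < Ψ x := hmono ⟨le_rfl, (hx.1.trans hx.2).le⟩ ⟨hx.1.le, hx.2.le⟩ hx.1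
  obtain ⟨D, hD, hS⟩ := hilU hF (α := α) (ξ := (1 - β) * (1 - α)) (ν := β * (1 - α)) hα1
    (mul_nonneg (by linarith) (by linarith)) (mul_pos hβ0 (by linarith)) (by ring)
  rw [psiHD_eq hmono hpos hf hD hx]
  exact hS _ (by linarith)

/-- The Hilfer derivative of the integral of positive integer order. -/
theorem hil_int_eq {a b : ℝ} {Ψ g W : ℝ → ℝ} {w : ℕ → ℝ}
    (hmono : StrictMonoOn Ψ (Icc a b)) (hpos : ∀ t ∈ Icc a b, 0 < deriv Ψ t)
    (hg : ∀ t ∈ Ioo a b, g t = W (Ψ t - Ψ a)) {α β : ℝ}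
    (hα1 : α < 1) (hβ0 : 0 < β) (hβ1 : β ≤ 1) (hW : Ser W w)
    {x : ℝ} (hx : x ∈ Ioo a b) (m : ℕ) :
    psiHD a Ψ (fun y => psiI a Ψ g ((m + 1 : ℕ) : ℝ) y) α β x =
      J (m + 1 - α) W (Ψ x - Ψ a) := by
  have hX : Ψ a < Ψ x := hmono ⟨le_rfl, (hx.1.trans hx.2).le⟩ ⟨hx.1.le, hx.2.le⟩ hx.1
  have hm : (0 : ℝ) ≤ m := m.cast_nonneg
  obtain ⟨K, hK, hJ⟩ := J_fact hW (ν := ((m + 1 : ℕ) : ℝ)) (by positivity) (σ := 0) (by norm_num)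
  simp only [J_zero_exp, zero_add] at hJ
  have hf : ∀ t ∈ Ioo a b, (fun y => psiI a Ψ g ((m + 1 : ℕ) : ℝ) y) t =
      (fun z => z ^ (m + 1) * K z) (Ψ t - Ψ a) := by
    intro t ht
    have hat : Ψ a < Ψ t := hmono ⟨le_rfl, (hx.1.trans hx.2).le⟩ ⟨ht.1.le, ht.2.le⟩ ht.1
    simp only
    rw [psiI_eq hmono hpos hg _ ht, hJ _ (by linarith), Real.rpow_natCast]
  have h1 := hil_eq hmono hpos hf hα1 hβ0 hβ1 (hK.shift (m + 1)) hx
  rw [hasSum_shiftc, show shiftc (m + 1) _ 0 = 0 by simp [shiftc], zero_mul, add_zero] at h1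
  refine h1.unique ?_
  have h2 := J_hasSum hW (ν := (m : ℝ) + 1 - α) (by linarith) (σ := 0) (by norm_num)
    (show 0 < Ψ x - Ψ a by linarith)
  rw [J_zero_exp] at h2
  refine hs_congr h2 fun n => ?_
  have g1 := Real.Gamma_pos_of_pos (show 0 < (n : ℝ) + 1 + (m + 1) by positivity)
  push_cast
  rw [add_zero, show (n : ℝ) + (m + 1) + 1 = n + 1 + (m + 1) by ring,
    show (n : ℝ) + (m + 1) - α = n + (m + 1 - α) by ring,
    show (n : ℝ) + 1 + (m + 1) - α = n + 1 + (m + 1 - α) by ring]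
  field_simp

/-- `R((u - X) K) = α J^{1-α} K (X)`. -/
theorem R_factor {K : ℝ → ℝ} {κ : ℕ → ℝ} (hK : Ser K κ) {α X : ℝ} (hα : α < 1) (hX : 0 < X) :
    HasSum (fun n : ℕ => (shiftc 1 κ n + (-X) * κ n) *
        (Real.Gamma (n + 1) / Real.Gamma (n + 1 - α) * X ^ ((n : ℝ) - α)))
      (α * J (1 - α) K X) := by
  obtain ⟨D, -, hS⟩ := hilU hK (α := α) (ξ := 0) (ν := 1 - α) hα le_rfl (by linarith) (by ring)
  have h1 := (hS X hX).mul_left X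
  have h2 := J_hasSum hK (ν := 1 - α) (by linarith) (σ := 0) (by norm_num) hX
  rw [J_zero_exp] at h2
  have h3 := (h2.mul_left α).add h1
  have h4 : HasSum (fun n : ℕ => κ n * (Real.Gamma (((n + 1 : ℕ) : ℝ) + 1) /
      Real.Gamma (((n + 1 : ℕ) : ℝ) + 1 - α) * X ^ (((n + 1 : ℕ) : ℝ) - α))) _ :=
    hs_congr h3 fun n => by
      have hn : (0 : ℝ) ≤ n := n.cast_nonneg
      have hp : 0 < (n : ℝ) + 1 - α := by linarith
      have g1 := Real.Gamma_pos_of_pos hp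
      push_cast
      rw [Real.Gamma_add_one (s := (n : ℝ) + 1) (by positivity), add_zero,
        show (n : ℝ) + 1 + 1 - α = (n + 1 - α) + 1 by ring,
        show (n : ℝ) + 1 + (1 - α) = (n + 1 - α) + 1 by ring,
        show (n : ℝ) + (1 - α) = (n - α) + 1 by ring,
        show X ^ ((n : ℝ) + 1 - α) = X ^ (((n : ℝ) - α) + 1) by ring_nf,
        Real.Gamma_add_one hp.ne', Real.rpow_add_one hX.ne']
      field_simp
      ring
  have h5 := ((hasSum_shiftc 1 κ (fun n : ℕ => (Real.Gamma ((n : ℝ) + 1) /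
      Real.Gamma ((n : ℝ) + 1 - α) * X ^ ((n : ℝ) - α))) _).2 h4).sub h1
  rw [add_sub_cancel_right] at h5
  exact hs_congr h5 fun n => by ring

end LeibnizHelpers

/-- Leibniz Type Rule II for the Ψ-Hilfer fractional derivative; the
Ψ-Hilfer derivative of order `α - m` is the Ψ-Hilfer derivative of order `α` applied
to the Ψ-fractional integral of order `m`. -/
theorem leibniz_type_rule_II
    (a b : ℝ) (hab : a < b) (α β : ℝ)
    (hα0 : 0 < α) (hα1 : α < 1) (hβ0 : 0 < β) (hβ1 : β ≤ 1)
    (Ψ : ℝ → ℝ)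
    (hΨmono : StrictMonoOn Ψ (Set.Icc a b))
    (hΨC1 : ContDiffOn ℝ 1 Ψ (Set.Icc a b))
    (hΨpos : ∀ t ∈ Set.Icc a b, 0 < deriv Ψ t)
    (f g h w : ℝ → ℝ)
    (hf : f = fun t => h (Ψ t)) (hg : g = fun t => w (Ψ t))
    (hh : EntireReal h) (hw : EntireReal w)
    (x : ℝ) (hx : x ∈ Set.Ioo a b) :
    Summable (fun m : ℕ => genBinom α m * iteratedDeriv m h (Ψ x) *
        psiHD a Ψ (fun y => psiI a Ψ g (m : ℝ) y) α β x) ∧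
    Summable (fun k : ℕ =>
        genBinom (-((1 - β) * (1 - α))) k * psiI a Ψ g ((1 - β) * (1 - α) + k) a *
          (iteratedDeriv k h (Ψ x) - iteratedDeriv k h (Ψ a)) *
          (Ψ x - Ψ a) ^ (-(α + (1 - β) * (1 - α))) / Real.Gamma (β * (1 - α))) ∧
    psiHD a Ψ (fun t => f t * g t) α β x =
      (∑' m : ℕ, genBinom α m * iteratedDeriv m h (Ψ x) *
        psiHD a Ψ (fun y => psiI a Ψ g (m : ℝ) y) α β x) +
      ∑' k : ℕ,
        genBinom (-((1 - β) * (1 - α))) k * psiI a Ψ g ((1 - β) * (1 - α) + k) a *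
          (iteratedDeriv k h (Ψ x) - iteratedDeriv k h (Ψ a)) *
          (Ψ x - Ψ a) ^ (-(α + (1 - β) * (1 - α))) / Real.Gamma (β * (1 - α)) := by
  have hXpos : Ψ a < Ψ x :=
    hΨmono ⟨le_rfl, hab.le⟩ ⟨hx.1.le, hx.2.le⟩ hx.1
  set X := Ψ x - Ψ a with hXdef
  have hX : 0 < X := by rw [hXdef]; linarith
  set ε : ℝ := if (1 - β) * (1 - α) = 0 then X ^ (-α) / Real.Gamma (1 - α) else 0 with hε
  -- series expansions
  obtain ⟨wc, hW⟩ : ∃ wc, Ser (fun v => w (Ψ a + v)) wc := ⟨_, hw.recenter (Ψ a)⟩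
  obtain ⟨Q, hQ, hQe⟩ := (hh.recenter (Ψ x)).tail
  simp only [iteratedDeriv_zero, Nat.factorial_zero, Nat.cast_one, div_one] at hQe
  have hQ0 := hQ.recenter (-X)
  have hK := hQ0.mul hW
  set κ := fun n => ∑ ij ∈ Finset.HasAntidiagonal.antidiagonal n,
    (fun n => iteratedDeriv n Q (-X) / (n.factorial : ℝ)) ij.1 * wc ij.2 with hκ
  have hP := (hW.const_mul (h (Ψ x))).add ((hK.shift 1).add (hK.const_mul (-X)))
  have hgW : ∀ t ∈ Set.Ioo a b, g t = (fun v => w (Ψ a + v)) (Ψ t - Ψ a) := by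
    intro t _
    rw [hg]; simp
  have hfgP : ∀ t ∈ Set.Ioo a b, (fun t => f t * g t) t =
      (fun z => h (Ψ x) * w (Ψ a + z) + (z ^ 1 * (Q (-X + z) * w (Ψ a + z)) +
        -X * (Q (-X + z) * w (Ψ a + z)))) (Ψ t - Ψ a) := by
    intro t _
    have e := hQe (Ψ t - Ψ x)
    rw [show Ψ x + (Ψ t - Ψ x) = Ψ t by ring] at e
    simp only [hf, hg]
    rw [e, show Ψ a + (Ψ t - Ψ a) = Ψ t by ring, show -X + (Ψ t - Ψ a) = Ψ t - Ψ x by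
      rw [hXdef]; ring, hXdef]
    ring
  have hL := hil_eq hΨmono hΨpos hfgP hα1 hβ0 hβ1 hP hx
  have hR := hil_eq hΨmono hΨpos hgW hα1 hβ0 hβ1 hW hx
  have hKs := R_factor hK hα1 hX
  rw [← hXdef, ← hε] at hL hR
  -- the fractional Leibniz rule in integrated form
  have hmain := hL.unique (hs_congr ((hR.mul_left (h (Ψ x))).add hKs) fun n => by ring)
  have hwc : wc 0 = w (Ψ a) := by simpa using hW.zero.symm
  have hprod0 : h (Ψ x) * wc 0 + (shiftc 1 κ 0 + -X * κ 0) = h (Ψ a) * w (Ψ a) := by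
    have e := hQe (-X)
    rw [show Ψ x + -X = Ψ a by rw [hXdef]; ring] at e
    have k0 := hK.zero
    simp only [add_zero] at k0
    rw [← k0, hwc, e]
    simp [shiftc]
    ring
  rw [hprod0, hwc] at hmain
  have hJs := (J_mul_hasSum hW.differentiable.continuous hQ hα1 hX).mul_left α
  have hcomm : (fun z => Q (-X + z) * w (Ψ a + z)) =
      fun u => Q (u - X) * (fun v => w (Ψ a + v)) u := by
    funext u
    rw [show -X + u = u - X by ring]
  rw [hcomm] at hmain
  have hsum1 : HasSum (fun m : ℕ => genBinom α m * iteratedDeriv m h (Ψ x) *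
      psiHD a Ψ (fun y => psiI a Ψ g (m : ℝ) y) α β x)
      (α * J (1 - α) (fun u => Q (u - X) * (fun v => w (Ψ a + v)) u) X +
        h (Ψ x) * psiHD a Ψ g α β x) := by
    have h1 := (hasSum_nat_add_iff (f := fun m : ℕ => genBinom α m * iteratedDeriv m h (Ψ x) *
      psiHD a Ψ (fun y => psiI a Ψ g (m : ℝ) y) α β x) 1).1 (hs_congr hJs fun m => by
        rw [hil_int_eq hΨmono hΨpos hgW hα1 hβ0 hβ1 hW hx m, ← hXdef]
        have hb := binom_gamma hα1 m
        have hfac : ((m + 1).factorial : ℝ) ≠ 0 := by positivity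
        calc genBinom α (m + 1) * iteratedDeriv (m + 1) h (Ψ x) *
              J (m + 1 - α) (fun v => w (Ψ a + v)) X
            = (genBinom α (m + 1) * ((m + 1).factorial : ℝ)) *
              (iteratedDeriv (m + 1) h (Ψ x) / ((m + 1).factorial : ℝ)) *
              J (m + 1 - α) (fun v => w (Ψ a + v)) X := by field_simp
          _ = _ := by rw [hb]; ring)
    have h0 : (fun y => psiI a Ψ g ((0 : ℕ) : ℝ) y) = g := by
      funext y; simp [psiI]
    rw [Finset.sum_range_one, h0] at h1
    simpa [genBinom] using h1
  have hsum2 : HasSum (fun k : ℕ =>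
        genBinom (-((1 - β) * (1 - α))) k * psiI a Ψ g ((1 - β) * (1 - α) + k) a *
          (iteratedDeriv k h (Ψ x) - iteratedDeriv k h (Ψ a)) *
          X ^ (-(α + (1 - β) * (1 - α))) / Real.Gamma (β * (1 - α)))
      (ε * w (Ψ a) * (h (Ψ x) - h (Ψ a))) := by
    have hξ : 0 ≤ (1 - β) * (1 - α) := mul_nonneg (by linarith) (by linarith)
    have hz : ∀ γ : ℝ, γ ≠ 0 → psiI a Ψ g γ a = 0 := by
      intro γ hγ
      simp [psiI, hγ]
    have h1 := hasSum_single (f := fun k : ℕ =>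
        genBinom (-((1 - β) * (1 - α))) k * psiI a Ψ g ((1 - β) * (1 - α) + k) a *
          (iteratedDeriv k h (Ψ x) - iteratedDeriv k h (Ψ a)) *
          X ^ (-(α + (1 - β) * (1 - α))) / Real.Gamma (β * (1 - α))) 0 (by
        intro k hk
        have hk' : (0 : ℝ) < k := by exact_mod_cast Nat.pos_of_ne_zero hk
        rw [hz _ (by linarith)]
        simp)
    convert h1 using 1
    by_cases hξ0 : (1 - β) * (1 - α) = 0
    · have hb : β * (1 - α) = 1 - α := by linarith
      rw [hε, if_pos hξ0, hb, hξ0]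
      simp [genBinom, psiI, hg]
      ring
    · rw [hε, if_neg hξ0, hz _ (by simpa using hξ0)]
      simp
  refine ⟨hsum1.summable, hsum2.summable, ?_⟩
  rw [hsum1.tsum_eq, hsum2.tsum_eq]
  linear_combination hmain
end

section
/- (Leibniz rule for the Ψ-Riemann–Liouville derivative.) Let 0 < α < 1, a < b, Ψ : ℝ → ℝ strictly increasing and continuously differentiable on [a,b] with Ψ'(t) > 0 for all t ∈ [a,b]. Suppose f = h ∘ Ψ and g = w ∘ Ψ with h, w real-analytic with everywhere-convergent power series, and write f⁽ᵐ⁾(x) := h⁽ᵐ⁾(Ψ(x)). Then for every x ∈ (a,b): (^{RL}D^{α;Ψ}(f·g))(x) = Σ_{m=0}^∞ binom(α, m) f⁽ᵐ⁾(x) (^{RL}D^{α−m;Ψ} g)(x), the series converging. -/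
open Real

lemma hasSum_transfer {F G : ℕ → ℝ} {A B : ℝ} (hG : HasSum G B) (h1 : ∀ n, F n = G n)
    (h2 : A = B) : HasSum F A := by
  rw [h2, funext h1]; exact hG

lemma kernel_int {α : ℝ} (hα1 : α < 1) :
    IntervalIntegrable (fun σ : ℝ => (1 - σ) ^ (-α)) MeasureTheory.volume 0 1 := by
  have h := (intervalIntegral.intervalIntegrable_rpow' (a := 0) (b := 1) (r := -α)
    (by linarith)).comp_sub_left 1
  simpa using h.symm

lemma kernel_mul_int {α : ℝ} (hα1 : α < 1) {φ : ℝ → ℝ} (hφ : Continuous φ) :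
    IntervalIntegrable (fun σ : ℝ => (1 - σ) ^ (-α) * φ σ) MeasureTheory.volume 0 1 :=
  (kernel_int hα1).mul_continuousOn hφ.continuousOn

/-- The scaled form of the classical fractional integral. -/
noncomputable def scaledG (c α : ℝ) (u : ℝ → ℝ) (y : ℝ) : ℝ :=
  (y - c) ^ (1 - α) * ∫ σ in (0:ℝ)..1, (1 - σ) ^ (-α) * u (c + (y - c) * σ)

/-- Its derivative. -/
noncomputable def scaledA (c α : ℝ) (u : ℝ → ℝ) (y : ℝ) : ℝ :=
  (y - c) ^ (-α) * ∫ σ in (0:ℝ)..1, (1 - σ) ^ (-α) *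
    ((1 - α) * u (c + (y - c) * σ) + σ * ((y - c) * deriv u (c + (y - c) * σ)))

lemma scaledG_hasDerivAt {c α y : ℝ} (hα1 : α < 1) (hy : c < y) {u : ℝ → ℝ}
    (hu : ContDiff ℝ 1 u) : HasDerivAt (scaledG c α u) (scaledA c α u y) y := by
  have hcu := hu.continuous
  have hcd : Continuous (deriv u) := hu.continuous_deriv le_rfl
  have hdiff := hu.differentiable one_ne_zero
  obtain ⟨C, hC⟩ := ((isCompact_closedBall y 1).prod
    (isCompact_Icc (a := (0:ℝ)) (b := 1))).exists_bound_of_continuousOn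
    (f := fun p : ℝ × ℝ => deriv u (c + (p.1 - c) * p.2) * p.2) (by fun_prop)
  have key := (intervalIntegral.hasDerivAt_integral_of_dominated_loc_of_deriv_le
    (μ := MeasureTheory.volume) (a := 0) (b := 1)
    (F := fun y σ => (1 - σ) ^ (-α) * u (c + (y - c) * σ))
    (F' := fun y σ => (1 - σ) ^ (-α) * (deriv u (c + (y - c) * σ) * σ))
    (x₀ := y) (s := Metric.closedBall y 1)
    (bound := fun σ => (1 - σ) ^ (-α) * C)
    (Metric.closedBall_mem_nhds y one_pos)
    (Filter.Eventually.of_forall fun z => by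
      have := (kernel_mul_int hα1 (φ := fun σ => u (c + (z - c) * σ)) (by fun_prop)).def'
      exact this.aestronglyMeasurable)
    (kernel_mul_int hα1 (by fun_prop))
    (kernel_mul_int hα1 (φ := fun σ => deriv u (c + (y - c) * σ) * σ)
      (by fun_prop)).def'.aestronglyMeasurable
    (Filter.Eventually.of_forall fun σ hσ z hz => by
      rw [Set.uIoc_of_le zero_le_one] at hσ
      have h1 : 0 ≤ (1 - σ) ^ (-α) := Real.rpow_nonneg (by linarith [hσ.2]) _
      rw [norm_mul, Real.norm_of_nonneg h1]
      exact mul_le_mul_of_nonneg_left (hC (z, σ) ⟨hz, hσ.1.le, hσ.2⟩) h1)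
    ((kernel_int hα1).mul_const C)
    (Filter.Eventually.of_forall fun σ hσ z hz => by
      have h1 : HasDerivAt (fun z => c + (z - c) * σ) σ z := by
        simpa using (((hasDerivAt_id z).sub_const c).mul_const σ).const_add c
      exact (((hdiff _).hasDerivAt (x := c + (z - c) * σ)).comp z h1).const_mul _)).2
  have hL : 0 < y - c := by linarith
  have hp : HasDerivAt (fun z => (z - c) ^ (1 - α)) ((1 - α) * (y - c) ^ (-α)) y := by
    have := ((hasDerivAt_id y).sub_const c).rpow_const (p := 1 - α) (Or.inl hL.ne')
    refine this.congr_deriv ?_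
    simp only [id, one_mul, show 1 - α - 1 = -α by ring]
  have := hp.mul key
  refine this.congr_deriv ?_
  unfold scaledA
  have e1 : (y - c) ^ (1 - α) = (y - c) ^ (-α) * (y - c) := by
    rw [show 1 - α = -α + 1 by ring, Real.rpow_add_one hL.ne']
  have e2 : (∫ σ in (0:ℝ)..1, (1 - σ) ^ (-α) *
    ((1 - α) * u (c + (y - c) * σ) + σ * ((y - c) * deriv u (c + (y - c) * σ)))) =
     (1 - α) * (∫ σ in (0:ℝ)..1, (1 - σ) ^ (-α) * u (c + (y - c) * σ)) +
     (y - c) * (∫ σ in (0:ℝ)..1, (1 - σ) ^ (-α) * (deriv u (c + (y - c) * σ) * σ)) := by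
    rw [← intervalIntegral.integral_const_mul, ← intervalIntegral.integral_const_mul,
      ← intervalIntegral.integral_add]
    · congr 1; ext σ; ring
    · exact (kernel_mul_int hα1 (by fun_prop)).const_mul _
    · exact (kernel_mul_int hα1 (φ := fun σ => deriv u (c + (y - c) * σ) * σ)
        (by fun_prop)).const_mul _
  rw [e2, e1]
  ring

/-- Derivative when the function vanishes at the endpoint. -/
lemma scaledA_vanish {c α y : ℝ} (hα1 : α < 1) (hy : c < y) {u r : ℝ → ℝ}
    (hu : ContDiff ℝ 1 u) (hr : Continuous r) (hur : ∀ s, u s = (s - y) * r s) :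
    scaledA c α u y = -α * (y - c) ^ (-α) *
      ∫ σ in (0:ℝ)..1, (1 - σ) ^ (-α) * (-(y - c) * r (c + (y - c) * σ)) := by
  have hcu := hu.continuous
  have hcd : Continuous (deriv u) := hu.continuous_deriv le_rfl
  have hdiff := hu.differentiable one_ne_zero
  set ρ : ℝ → ℝ := fun σ => -(y - c) * r (c + (y - c) * σ) with hρ
  have hρc : Continuous ρ := by fun_prop
  have huρ : ∀ σ, u (c + (y - c) * σ) = (1 - σ) * ρ σ := fun σ => by
    rw [hur, hρ]; ring
  set q : ℝ → ℝ := fun σ => u (c + (y - c) * σ) + σ * ((y - c) * deriv u (c + (y - c) * σ))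
    + α * (σ * ρ σ) with hq
  have hqc : Continuous q := by fun_prop
  have h0 := intervalIntegral.integral_eq_sub_of_hasDerivAt_of_le (a := 0) (b := 1)
    (f := fun σ => σ * (1 - σ) ^ (1 - α) * ρ σ)
    (f' := fun σ => (1 - σ) ^ (-α) * q σ) zero_le_one
    (by
      apply Continuous.continuousOn
      have : Continuous fun σ : ℝ => (1 - σ) ^ (1 - α) :=
        (continuous_const.sub continuous_id).rpow_const fun _ => Or.inr (by linarith)
      fun_prop)
    (by
      intro σ hσ
      have h1 : 0 < 1 - σ := by linarith [hσ.2]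
      have d1 : HasDerivAt (fun σ => c + (y - c) * σ) (y - c) σ := by
        simpa using ((hasDerivAt_id σ).const_mul (y - c)).const_add c
      have d2 := ((hdiff _).hasDerivAt (x := c + (y - c) * σ)).comp σ d1
      have d3 : HasDerivAt (fun σ : ℝ => (1 - σ) ^ (-α)) (α * (1 - σ) ^ (-α - 1)) σ := by
        have := ((hasDerivAt_id σ).const_sub 1).rpow_const (p := -α) (Or.inl h1.ne')
        refine this.congr_deriv ?_
        simp only [id]; ring
      have d4 := ((hasDerivAt_id σ).mul d3).mul d2
      have d5 := d4.congr_of_eventuallyEq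
          (f₁ := fun σ => σ * (1 - σ) ^ (1 - α) * ρ σ) (by
        filter_upwards [Iio_mem_nhds hσ.2] with τ hτ
        have h2 : 0 < 1 - τ := by linarith [Set.mem_Iio.1 hτ]
        simp only [Pi.mul_apply, Function.comp, id]
        rw [huρ, show 1 - α = -α + 1 by ring, Real.rpow_add_one h2.ne']
        ring)
      refine d5.congr_deriv ?_
      have e : (1 - σ) ^ (-α) = (1 - σ) ^ (-α - 1) * (1 - σ) := by
        rw [← Real.rpow_add_one h1.ne']; ring_nf
      simp only [Pi.mul_apply, Function.comp, id, hq]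
      rw [huρ, e]
      ring)
    (kernel_mul_int hα1 hqc)
  simp only [sub_self, Real.zero_rpow (by linarith : (1 - α) ≠ 0)] at h0
  have h0' : (∫ σ in (0:ℝ)..1, (1 - σ) ^ (-α) * q σ) = 0 := by rw [h0]; ring
  unfold scaledA
  have e2 : (∫ σ in (0:ℝ)..1, (1 - σ) ^ (-α) *
    ((1 - α) * u (c + (y - c) * σ) + σ * ((y - c) * deriv u (c + (y - c) * σ)))) =
     (∫ σ in (0:ℝ)..1, (1 - σ) ^ (-α) * q σ) +
     (-α) * (∫ σ in (0:ℝ)..1, (1 - σ) ^ (-α) * ρ σ) := by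
    rw [← intervalIntegral.integral_const_mul, ← intervalIntegral.integral_add]
    · congr 1; ext σ; simp only [hq]; rw [huρ]; ring
    · exact kernel_mul_int hα1 hqc
    · exact (kernel_mul_int hα1 hρc).const_mul _
  rw [e2, h0']
  ring

lemma entire_contDiff {h : ℝ → ℝ} (hh : EntireReal h) : ContDiff ℝ 1 h := by
  obtain ⟨p, hp⟩ := hh
  have : AnalyticOnNhd ℝ h Set.univ := by
    have := hp.analyticOnNhd
    simpa using this
  exact (contDiffOn_univ.1 (this.contDiffOn uniqueDiffOn_univ))

lemma entire_hasSum {h : ℝ → ℝ} (hh : EntireReal h) (y t : ℝ) :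
    HasSum (fun n : ℕ => iteratedDeriv n h y / n.factorial * t ^ n) (h (y + t)) := by
  obtain ⟨p, hp⟩ := hh
  have h1 := hp.changeOrigin (y := y) (by simp)
  have h2 := h1.hasSum_iteratedFDeriv (y := t) (by simp)
  rw [zero_add] at h2
  refine hasSum_transfer h2 (fun n => ?_) rfl
  rw [iteratedDeriv_eq_iteratedFDeriv]
  have := (iteratedFDeriv ℝ n h y).map_smul_univ (fun _ => t) (fun _ => 1)
  simp only [smul_eq_mul, mul_one, Finset.prod_const, Finset.card_univ, Fintype.card_fin] at this
  rw [this, smul_eq_mul]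
  ring

/-- Series expansion of the regularised integral. -/
lemma series_int {c α y : ℝ} (hα1 : α < 1) (hy : c < y) {h w : ℝ → ℝ}
    (hh : EntireReal h) (hw : Continuous w) :
    HasSum (fun n : ℕ => iteratedDeriv (n + 1) h y / (n + 1).factorial * (-(y - c)) ^ (n + 1) *
        ∫ σ in (0:ℝ)..1, (1 - σ) ^ ((n : ℝ) + 1 - α - 1) * w (c + (y - c) * σ))
      (∫ σ in (0:ℝ)..1, (1 - σ) ^ (-α) *
        (-(y - c) * (dslope h y (c + (y - c) * σ) * w (c + (y - c) * σ)))) := by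
  set L := y - c with hL
  set d : ℕ → ℝ := fun n => iteratedDeriv (n + 1) h y / (n + 1).factorial * (-L) ^ (n + 1) with hd
  obtain ⟨C, hC⟩ := (isCompact_Icc (a := (0:ℝ)) (b := 1)).exists_bound_of_continuousOn
    (f := fun σ : ℝ => w (c + L * σ)) (by fun_prop)
  have hsd : Summable (fun n => |d n|) := by
    have := ((summable_nat_add_iff 1).2 (entire_hasSum hh y (-L)).summable).abs
    exact this
  have hcong : ∀ n : ℕ, d n * (∫ σ in (0:ℝ)..1, (1 - σ) ^ ((n : ℝ) + 1 - α - 1) * w (c + L * σ)) =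
      ∫ σ in (0:ℝ)..1, (1 - σ) ^ (-α) * (d n * (1 - σ) ^ n * w (c + L * σ)) := by
    intro n
    rw [← intervalIntegral.integral_const_mul]
    apply intervalIntegral.integral_congr_ae
    have : ∀ᵐ σ : ℝ, σ ≠ 1 := by simp [MeasureTheory.ae_iff]
    filter_upwards [this] with σ hσ _
    rw [show (n : ℝ) + 1 - α - 1 = -α + n by ring, Real.rpow_add_natCast (sub_ne_zero.2 hσ.symm)]
    ring
  have main : HasSum (fun n : ℕ => ∫ σ in (0:ℝ)..1,
      (1 - σ) ^ (-α) * (d n * (1 - σ) ^ n * w (c + L * σ)))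
      (∫ σ in (0:ℝ)..1, (1 - σ) ^ (-α) *
        (-L * (dslope h y (c + L * σ) * w (c + L * σ)))) := by
    refine intervalIntegral.hasSum_integral_of_dominated_convergence
      (fun n σ => |d n| * ((1 - σ) ^ (-α) * C)) ?_ ?_ ?_ ?_ ?_
    · intro n
      exact (kernel_mul_int hα1 (φ := fun σ => d n * (1 - σ) ^ n * w (c + L * σ))
        (by fun_prop)).def'.aestronglyMeasurable
    · intro n
      refine Filter.Eventually.of_forall fun σ hσ => ?_
      rw [Set.uIoc_of_le zero_le_one] at hσ
      have h1 : 0 ≤ 1 - σ := by linarith [hσ.2]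
      have h2 : 0 ≤ (1 - σ) ^ (-α) := Real.rpow_nonneg h1 _
      have h3 := hC σ ⟨hσ.1.le, hσ.2⟩
      have h4 : (1 - σ) ^ n ≤ 1 := pow_le_one₀ h1 (by linarith [hσ.1])
      rw [norm_mul, norm_mul, norm_mul, Real.norm_of_nonneg h2,
        Real.norm_of_nonneg (pow_nonneg h1 n), Real.norm_eq_abs (d n)]
      calc _ ≤ (1 - σ) ^ (-α) * (|d n| * 1 * C) := by gcongr
        _ = _ := by ring
    · exact Filter.Eventually.of_forall fun σ hσ => hsd.mul_right _
    · simp_rw [tsum_mul_right]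
      exact ((kernel_int hα1).mul_const C).const_mul _
    · have : ∀ᵐ σ : ℝ, σ ≠ 1 := by simp [MeasureTheory.ae_iff]
      filter_upwards [this] with σ hσ _
      have h1 : 1 - σ ≠ 0 := sub_ne_zero.2 hσ.symm
      have hs := entire_hasSum hh y (-L * (1 - σ))
      rw [← hasSum_nat_add_iff' 1] at hs
      simp only [Finset.range_one, Finset.sum_singleton, iteratedDeriv_zero, Nat.factorial_zero,
        Nat.cast_one, div_one, pow_zero, mul_one] at hs
      have e : y + -L * (1 - σ) = c + L * σ := by rw [hL]; ring
      have hds := sub_smul_dslope h y (c + L * σ)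
      rw [e, ← hds, smul_eq_mul] at hs
      have hs2 := ((hs.mul_left ((1 - σ)⁻¹)).mul_right (w (c + L * σ))).mul_left ((1 - σ) ^ (-α))
      refine hasSum_transfer hs2 (fun n => ?_) ?_
      · rw [mul_pow, pow_succ (1 - σ)]
        simp only [hd]
        field_simp
      · have : c + L * σ - y = (1 - σ) * (-L) := by rw [hL]; ring
        rw [this]
        field_simp
  simp_rw [← hcong] at main
  exact main

/-- Change of variables. -/
lemma psi_subst {a b : ℝ} {Ψ : ℝ → ℝ}
    (hΨmono : StrictMonoOn Ψ (Set.Icc a b))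
    (hΨpos : ∀ t ∈ Set.Icc a b, 0 < deriv Ψ t) (u : ℝ → ℝ) (β : ℝ)
    {x : ℝ} (hx : x ∈ Set.Ioo a b) :
    ∫ t in a..x, deriv Ψ t * (Ψ x - Ψ t) ^ (β - 1) * u (Ψ t) =
      (Ψ x - Ψ a) ^ β *
        ∫ σ in (0:ℝ)..1, (1 - σ) ^ (β - 1) * u (Ψ a + (Ψ x - Ψ a) * σ) := by
  have hsub : Set.Icc a x ⊆ Set.Icc a b := Set.Icc_subset_Icc_right hx.2.le
  have hd : ∀ t ∈ Set.Icc a b, DifferentiableAt ℝ Ψ t := fun t ht =>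
    differentiableAt_of_deriv_ne_zero (hΨpos t ht).ne'
  have hmono := hΨmono.mono hsub
  have hlt : Ψ a < Ψ x := hmono ⟨le_rfl, hx.1.le⟩ ⟨hx.1.le, le_rfl⟩ hx.1
  have himg : Ψ '' Set.Ioo a x = Set.Ioo (Ψ a) (Ψ x) :=
    ContinuousOn.image_Ioo_of_strictMonoOn hx.1.le
      (fun t ht => (hd t (hsub ht)).continuousAt.continuousWithinAt) hmono
  have h1 := MeasureTheory.integral_image_eq_integral_abs_deriv_smul (s := Set.Ioo a x)
    (f := Ψ) (f' := deriv Ψ) measurableSet_Ioo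
    (fun t ht => (hd t (hsub (Set.Ioo_subset_Icc_self ht))).hasDerivAt.hasDerivWithinAt)
    (hmono.injOn.mono Set.Ioo_subset_Icc_self)
    (fun s => (Ψ x - s) ^ (β - 1) * u s)
  rw [himg] at h1
  have hL : 0 < Ψ x - Ψ a := by linarith
  have h2 := intervalIntegral.integral_comp_mul_add (a := 0) (b := 1)
    (fun s => (Ψ x - s) ^ (β - 1) * u s) hL.ne' (Ψ a)
  simp only [mul_zero, zero_add, mul_one, sub_add_cancel, smul_eq_mul] at h2
  rw [intervalIntegral.integral_of_le hx.1.le, MeasureTheory.integral_Ioc_eq_integral_Ioo]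
  rw [intervalIntegral.integral_of_le hlt.le, MeasureTheory.integral_Ioc_eq_integral_Ioo, h1] at h2
  have h3 : ∫ t in Set.Ioo a x, deriv Ψ t * (Ψ x - Ψ t) ^ (β - 1) * u (Ψ t) =
      ∫ t in Set.Ioo a x, |deriv Ψ t| • ((Ψ x - Ψ t) ^ (β - 1) * u (Ψ t)) := by
    refine MeasureTheory.setIntegral_congr_fun measurableSet_Ioo fun t ht => ?_
    simp only [smul_eq_mul]
    rw [abs_of_pos (hΨpos t (hsub (Set.Ioo_subset_Icc_self ht))), mul_assoc]
  rw [h3]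
  have h4 : ∫ σ in (0:ℝ)..1, (Ψ x - ((Ψ x - Ψ a) * σ + Ψ a)) ^ (β - 1) *
      u ((Ψ x - Ψ a) * σ + Ψ a) = (Ψ x - Ψ a) ^ (β - 1) *
      ∫ σ in (0:ℝ)..1, (1 - σ) ^ (β - 1) * u (Ψ a + (Ψ x - Ψ a) * σ) := by
    rw [← intervalIntegral.integral_const_mul]
    refine intervalIntegral.integral_congr fun σ hσ => ?_
    rw [Set.uIcc_of_le zero_le_one] at hσ
    rw [show Ψ x - ((Ψ x - Ψ a) * σ + Ψ a) = (Ψ x - Ψ a) * (1 - σ) by ring,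
      Real.mul_rpow hL.le (by linarith [hσ.2]), add_comm (_ * σ)]
    ring
  rw [h4] at h2
  have e : (Ψ x - Ψ a) ^ β = (Ψ x - Ψ a) * (Ψ x - Ψ a) ^ (β - 1) := by
    rw [mul_comm, ← Real.rpow_add_one hL.ne']; ring_nf
  rw [e, mul_assoc, h2]
  field_simp

lemma psiRLD_eq {a b : ℝ} {Ψ : ℝ → ℝ}
    (hΨmono : StrictMonoOn Ψ (Set.Icc a b))
    (hΨpos : ∀ t ∈ Set.Icc a b, 0 < deriv Ψ t) {u : ℝ → ℝ} (hu : ContDiff ℝ 1 u)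
    {α : ℝ} (hα0 : 0 < α) (hα1 : α < 1) {x : ℝ} (hx : x ∈ Set.Ioo a b) :
    psiRLD a Ψ (fun t => u (Ψ t)) α x = (Real.Gamma (1 - α))⁻¹ * scaledA (Ψ a) α u (Ψ x) := by
  have hxI := Set.Ioo_subset_Icc_self hx
  have hlt : Ψ a < Ψ x := hΨmono ⟨le_rfl, (hx.1.trans hx.2).le⟩ hxI hx.1
  have hpos := hΨpos x hxI
  have hdx := (differentiableAt_of_deriv_ne_zero hpos.ne').hasDerivAt
  have hev : (fun y => psiI a Ψ (fun t => u (Ψ t)) (1 - α) y) =ᶠ[nhds x]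
      fun y => (Real.Gamma (1 - α))⁻¹ * scaledG (Ψ a) α u (Ψ y) := by
    filter_upwards [Ioo_mem_nhds hx.1 hx.2] with z hz
    unfold psiI scaledG
    rw [if_neg (by linarith), psi_subst hΨmono hΨpos u (1 - α) hz]
    simp only [show 1 - α - 1 = -α by ring]
  have hder := (((scaledG_hasDerivAt hα1 hlt hu).comp x hdx).const_mul
    ((Real.Gamma (1 - α))⁻¹)).congr_of_eventuallyEq hev
  unfold psiRLD
  rw [if_neg (by linarith), hder.deriv]
  field_simp

lemma psiRLD_neg_eq {a b : ℝ} {Ψ : ℝ → ℝ}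
    (hΨmono : StrictMonoOn Ψ (Set.Icc a b))
    (hΨpos : ∀ t ∈ Set.Icc a b, 0 < deriv Ψ t) (u : ℝ → ℝ)
    {α : ℝ} (hα1 : α < 1) {x : ℝ} (hx : x ∈ Set.Ioo a b) (n : ℕ) :
    psiRLD a Ψ (fun t => u (Ψ t)) (α - ((n + 1 : ℕ) : ℝ)) x =
      (Real.Gamma ((n : ℝ) + 1 - α))⁻¹ * ((Ψ x - Ψ a) ^ ((n : ℝ) + 1 - α) *
      ∫ σ in (0:ℝ)..1, (1 - σ) ^ ((n : ℝ) + 1 - α - 1) * u (Ψ a + (Ψ x - Ψ a) * σ)) := by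
  have hn : (0:ℝ) ≤ n := n.cast_nonneg
  unfold psiRLD psiI
  push_cast
  rw [if_pos (by linarith), if_neg (by linarith),
    show -(α - ((n : ℝ) + 1)) = (n : ℝ) + 1 - α by ring, psi_subst hΨmono hΨpos u _ hx]

lemma genBinom_gamma {α : ℝ} (hα1 : α < 1) (n : ℕ) :
    genBinom α (n + 1) * (n + 1).factorial * Real.Gamma (1 - α) =
      (-1) ^ (n + 1) * (-α) * Real.Gamma ((n : ℝ) + 1 - α) := by
  have key : ∀ n : ℕ, (∏ i ∈ Finset.range (n + 1), (α - (i : ℝ))) * Real.Gamma (1 - α) =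
      (-1) ^ (n + 1) * (-α) * Real.Gamma ((n : ℝ) + 1 - α) := by
    intro n
    induction n with
    | zero => simp
    | succ k ih =>
      have hk : (0:ℝ) ≤ k := k.cast_nonneg
      rw [Finset.prod_range_succ, mul_right_comm, ih]
      push_cast
      rw [show (k : ℝ) + 1 + 1 - α = ((k : ℝ) + 1 - α) + 1 by ring,
        Real.Gamma_add_one (by linarith)]
      ring
  rw [← key]
  unfold genBinom
  have : ((n + 1).factorial : ℝ) ≠ 0 := by positivity
  field_simp

/-- Leibniz rule for the Ψ-Riemann–Liouville fractional derivative. -/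
theorem leibniz_psi_RL
    (a b : ℝ) (hab : a < b) (α : ℝ) (hα0 : 0 < α) (hα1 : α < 1)
    (Ψ : ℝ → ℝ)
    (hΨmono : StrictMonoOn Ψ (Set.Icc a b))
    (hΨC1 : ContDiffOn ℝ 1 Ψ (Set.Icc a b))
    (hΨpos : ∀ t ∈ Set.Icc a b, 0 < deriv Ψ t)
    (f g h w : ℝ → ℝ)
    (hf : f = fun t => h (Ψ t)) (hg : g = fun t => w (Ψ t))
    (hh : EntireReal h) (hw : EntireReal w)
    (x : ℝ) (hx : x ∈ Set.Ioo a b) :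
    HasSum
      (fun m : ℕ => genBinom α m * iteratedDeriv m h (Ψ x) * psiRLD a Ψ g (α - m) x)
      (psiRLD a Ψ (fun t => f t * g t) α x) := by
  have hxI := Set.Ioo_subset_Icc_self hx
  have hlt : Ψ a < Ψ x := hΨmono ⟨le_rfl, hab.le⟩ hxI hx.1
  have ch := entire_contDiff hh
  have cw := entire_contDiff hw
  subst hf hg
  set c := Ψ a with hc
  set y := Ψ x with hy
  have hL : 0 < y - c := by linarith
  -- decomposition
  have hds : Continuous (dslope h y) := by
    rw [← continuousOn_univ, continuousOn_dslope Filter.univ_mem]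
    exact ⟨ch.continuous.continuousOn, (ch.differentiable one_ne_zero) y⟩
  have hv : ContDiff ℝ 1 (fun s => (h s - h y) * w s) := (ch.sub contDiff_const).mul cw
  have hsplit : scaledA c α (fun s => h s * w s) y =
      h y * scaledA c α w y + scaledA c α (fun s => (h s - h y) * w s) y := by
    have d1 := ((scaledG_hasDerivAt hα1 hlt cw).const_mul (h y)).add
      (scaledG_hasDerivAt hα1 hlt hv)
    have d2 := scaledG_hasDerivAt hα1 hlt (ch.mul cw)
    have he : scaledG c α (fun s => h s * w s) =
        (fun z => h y * scaledG c α w z) + scaledG c α (fun s => (h s - h y) * w s) := by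
      ext z
      have hcw := cw.continuous
      have hch := ch.continuous
      simp only [Pi.add_apply, scaledG]
      rw [mul_left_comm, ← mul_add, ← intervalIntegral.integral_const_mul (h y),
        ← intervalIntegral.integral_add]
      · congr 2; ext σ; ring
      · exact (kernel_mul_int hα1 (by fun_prop)).const_mul _
      · exact kernel_mul_int hα1 (φ := fun σ => (h (c + (z - c) * σ) - h y) * w (c + (z - c) * σ))
          (by fun_prop)
    have d2' : HasDerivAt (scaledG c α (fun s => h s * w s))
        (scaledA c α (fun s => h s * w s) y) y := d2
    rw [he] at d2'
    exact d2'.unique d1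
  have hvan := scaledA_vanish hα1 hlt hv (r := fun s => dslope h y s * w s)
    (hds.mul cw.continuous) (fun s => by
      have := sub_smul_dslope h y s
      rw [smul_eq_mul] at this
      rw [← this]; ring)
  have hser := series_int hα1 hlt hh cw.continuous
  have hG : Real.Gamma (1 - α) ≠ 0 := (Real.Gamma_pos_of_pos (by linarith)).ne'
  rw [psiRLD_eq hΨmono hΨpos (u := fun s => h s * w s) (ch.mul cw) hα0 hα1 hx, ← hc, ← hy,
    hsplit, hvan]
  rw [← hasSum_nat_add_iff' 1]
  refine hasSum_transfer (hser.mul_left ((Real.Gamma (1 - α))⁻¹ * (-α * (y - c) ^ (-α))))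
    (fun n => ?_) ?_
  · rw [psiRLD_neg_eq hΨmono hΨpos w hα1 hx n, ← hc, ← hy]
    have hg := genBinom_gamma hα1 n
    have hn : (0:ℝ) ≤ n := n.cast_nonneg
    have hGn : Real.Gamma ((n : ℝ) + 1 - α) ≠ 0 := (Real.Gamma_pos_of_pos (by linarith)).ne'
    have hfac : ((n + 1).factorial : ℝ) ≠ 0 := by positivity
    have hb : genBinom α (n + 1) = (-1) ^ (n + 1) * (-α) * Real.Gamma ((n : ℝ) + 1 - α) /
        ((n + 1).factorial * Real.Gamma (1 - α)) := by
      rw [eq_div_iff (by positivity), ← hg]; ring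
    have hp : (y - c) ^ ((n : ℝ) + 1 - α) = (y - c) ^ (-α) * (y - c) ^ (n + 1) := by
      rw [← Real.rpow_add_natCast hL.ne']; congr 1; push_cast; ring
    rw [hb, hp, neg_pow (y - c)]
    generalize (∫ σ in (0:ℝ)..1, (1 - σ) ^ ((n : ℝ) + 1 - α - 1) * w (c + (y - c) * σ)) = W
    field_simp
  · simp only [Finset.range_one, Finset.sum_singleton, iteratedDeriv_zero, Nat.cast_zero, sub_zero]
    rw [psiRLD_eq hΨmono hΨpos cw hα0 hα1 hx, ← hc, ← hy]
    simp only [genBinom, Finset.range_zero, Finset.prod_empty, Nat.factorial_zero, Nat.cast_one]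
    ring
end
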